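/- arXiv:2107.12767 — 3 statements merged into one kernel-verified Lean document; each statement's English description precedes it below -/
import Mathlib

section
/- Let p > 2 and assume p − 1 < λ < ∞ if N ≤ p(p+3)/(p−1), and p − 1 < λ < Λ_c(N, p) if N > p(p+3)/(p−1). If u ∈ C^1(ℝ^N) is a stable weak solution of −Δ_p u = |u|^{λ−1} u on all of ℝ^N, then u ≡ 0. -/
open MeasureTheory
open scoped RealInnerProductSpace

/-- The critical exponent `Λ_c(N, p)`. -/
noncomputable def LambdaC (N : ℕ) (p : ℝ) : ℝ :=
  (((p - 1) * N - p) ^ 2 + p ^ 2 * (p - 2) - p ^ 2 * (p - 1) * N +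
      2 * p ^ 2 * Real.sqrt ((p - 1) * (N - 1))) /
    ((N - p) * ((p - 1) * N - p * (p + 3)))


/-- Key inequality. -/
lemma key_ineq (N p l : ℝ) (hp : 2 < p) (hl : p - 1 < l)
    (h : N > p * (p + 3) / (p - 1) → l < (((p - 1) * N - p) ^ 2 + p ^ 2 * (p - 2) - p ^ 2 * (p - 1) * N +
      2 * p ^ 2 * Real.sqrt ((p - 1) * (N - 1))) /
    ((N - p) * ((p - 1) * N - p * (p + 3)))) :
    N * (p - 1) * (l - (p - 1)) < p * ((p + 1) * l - (p - 1) + 2 * Real.sqrt (l * (l - (p - 1)))) := by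
  have hs0 := Real.sqrt_nonneg (l * (l - (p - 1)))
  have hsq := Real.sq_sqrt (show 0 ≤ l * (l - (p - 1)) by apply mul_nonneg <;> linarith)
  set w := Real.sqrt (l * (l - (p - 1))) with hw
  clear_value w
  clear hw
  obtain ⟨k, hk⟩ : ∃ k, k = p - 1 := ⟨_, rfl⟩
  rw [← hk] at h hl hsq ⊢
  have hk1 : 1 < k := by linarith
  have hpk : p = k + 1 := by linarith
  by_cases hN : N > p * (p + 3) / k
  · have hl2 := h hN
    have hN1 : p * (p + 3) < N * k := by rwa [gt_iff_lt, div_lt_iff₀ (by linarith)] at hN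
    have hNp : p < N := by
      by_contra hc
      push Not at hc
      nlinarith
    have hden : 0 < (N - p) * (k * N - p * (p + 3)) := by
      apply mul_pos <;> linarith
    rw [lt_div_iff₀ hden] at hl2
    have ht0 := Real.sqrt_nonneg (k * (N - 1))
    have htq := Real.sq_sqrt (show 0 ≤ k * (N - 1) by apply mul_nonneg <;> linarith)
    set s := Real.sqrt (k * (N - 1)) with hs
    obtain ⟨α, hα⟩ : ∃ α, α = k * N - p * (p + 1) := ⟨_, rfl⟩
    obtain ⟨β, hβ⟩ : ∃ β, β = k * (k * N - p) := ⟨_, rfl⟩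
    have hα2 : 2 * p < α := by linarith
    suffices α * l - β < 2 * p * w by rw [hα, hβ] at this; nlinarith
    by_cases hc : α * l < β
    · have : 0 ≤ 2 * p * w := by positivity
      linarith
    push Not at hc
    obtain ⟨D, hD⟩ : ∃ D, D = α ^ 2 - 4 * p ^ 2 := ⟨_, rfl⟩
    obtain ⟨E, hE⟩ : ∃ E, E = α * β - 2 * p ^ 2 * k := ⟨_, rfl⟩
    have hDpos : 0 < D := by rw [hD]; nlinarith
    have hDk : D = k * ((N - p) * (k * N - p * (p + 3))) := by
      rw [hD, hα, hpk]; ring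
    have hup : D * l - E < 2 * p ^ 2 * k * s := by
      have := mul_lt_mul_of_pos_left hl2 (show 0 < k by linarith)
      rw [hDk, hE, hα, hβ]
      have e : k * ((k * N - p) ^ 2 + p ^ 2 * (p - 2) - p ^ 2 * k * N + 2 * p ^ 2 * s)
        = (k * N - p * (p + 1)) * (k * (k * N - p)) - 2 * p ^ 2 * k + 2 * p ^ 2 * k * s := by
        ring
      linarith
    have hdisc : (2 * p ^ 2 * k * s) ^ 2 = E ^ 2 - D * β ^ 2 := by
      rw [mul_pow, htq, hE, hD, hα, hβ, hpk]; ring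
    have hba : α * k < β := by
      have h0 : β - α * k = k * p ^ 2 := by rw [hα, hβ]; ring
      have h1 : 0 < k * p ^ 2 := by positivity
      linarith
    have hT : 0 ≤ 2 * p ^ 2 * k * s := by positivity
    have hlow : -(2 * p ^ 2 * k * s) < D * l - E := by
      have h1 : -(α * (2 * p ^ 2 * k * s)) < D * β - α * E := by
        refine (abs_lt_of_sq_lt_sq' ?_ (mul_nonneg (by linarith) hT)).1
        have e2 : (D * β - α * E) ^ 2 - (α * (2 * p ^ 2 * k * s)) ^ 2
          = - (D * (4 * p ^ 2 * (β * (β - α * k)))) := by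
          rw [mul_pow α, hdisc, hE, hD]; ring
        have hβ0 : 0 < β := by
          have : 0 < α * k := mul_pos (by linarith) (by linarith)
          linarith
        have : 0 < D * (4 * p ^ 2 * (β * (β - α * k))) := by
          have : 0 < β - α * k := by linarith
          positivity
        linarith
      have h2 : D * β ≤ D * (α * l) := by gcongr
      have h3 : -(α * (2 * p ^ 2 * k * s)) < α * (D * l - E) := by
        calc _ < _ := h1
          _ ≤ D * (α * l) - α * E := by linarith
          _ = _ := by ring
      rw [← mul_neg] at h3
      exact lt_of_mul_lt_mul_left h3 (by linarith)
    have hQ : (D * l - E) ^ 2 < (2 * p ^ 2 * k * s) ^ 2 := by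
      apply sq_lt_sq'  <;> linarith
    apply lt_of_pow_lt_pow_left₀ 2 (by positivity)
    rw [mul_pow, hsq]
    have e3 : D * ((α * l - β) ^ 2 - (2 * p) ^ 2 * (l * (l - k))) = (D * l - E) ^ 2 - (E ^ 2 - D * β ^ 2) := by
      rw [hE, hD]; ring
    rw [hdisc] at hQ
    have : D * ((α * l - β) ^ 2 - (2 * p) ^ 2 * (l * (l - k))) < 0 := by linarith
    have := neg_of_mul_neg_right this hDpos.le
    linarith
  · have hN1 : N * k ≤ p * (p + 3) := by
      push Not at hN
      rwa [le_div_iff₀ (by linarith)] at hN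
    have hw2 : l - k < w := by
      apply lt_of_pow_lt_pow_left₀ 2 hs0
      rw [hsq]; nlinarith
    have : N * k * (l - k) ≤ p * (p + 3) * (l - k) := by
      apply mul_le_mul_of_nonneg_right hN1; linarith
    have h2 : p * (2 * (l - k)) < p * (2 * w) := by
      apply mul_lt_mul_of_pos_left <;> linarith
    subst hpk
    nlinarith [mul_pos (show 0 < k by linarith) (show 0 < k by linarith), mul_pos (mul_pos (show 0 < k by linarith) (show 0 < k by linarith)) (show 0 < k by linarith)]

lemma exists_gamma (N p l : ℝ) (hp : 2 < p) (hl : p - 1 < l)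
    (h : N > p * (p + 3) / (p - 1) → l < (((p - 1) * N - p) ^ 2 + p ^ 2 * (p - 2) - p ^ 2 * (p - 1) * N +
      2 * p ^ 2 * Real.sqrt ((p - 1) * (N - 1))) /
    ((N - p) * ((p - 1) * N - p * (p + 3)))) :
    ∃ g : ℝ, 1 < g ∧ (p - 1) * (g + 1) ^ 2 < 4 * g * l ∧ N * (l - p + 1) < p * (l + g) := by
  have key := key_ineq N p l hp hl h
  have hs0 := Real.sqrt_nonneg (l * (l - (p - 1)))
  have hsq := Real.sq_sqrt (show 0 ≤ l * (l - (p - 1)) by apply mul_nonneg <;> linarith)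
  set w := Real.sqrt (l * (l - (p - 1))) with hw
  clear_value w
  clear hw h
  obtain ⟨k, hk⟩ : ∃ k, k = p - 1 := ⟨_, rfl⟩
  rw [← hk] at hl hsq key ⊢
  have hk1 : 1 < k := by linarith
  obtain ⟨g₁, hg₁⟩ : ∃ g, g = (2 * l - k + 2 * w) / k := ⟨_, rfl⟩
  have hgk : k * g₁ = 2 * l - k + 2 * w := by rw [hg₁]; field_simp
  have h1 : 1 < g₁ := by
    by_contra hc; push Not at hc; nlinarith
  have hw0 : N * (l - k) / p - l < g₁ := by
    rw [sub_lt_iff_lt_add, div_lt_iff₀ (by linarith)]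
    have : k * (N * (l - k)) < k * ((g₁ + l) * p) := by
      have : k * ((g₁ + l) * p) = p * (k * g₁ + k * l) := by ring
      rw [this, hgk]
      have e : (p + 1) * l = 2 * l + k * l := by rw [hk]; ring
      rw [e] at key
      calc _ = N * k * (l - k) := by ring
        _ < _ := key
        _ = _ := by ring
    exact lt_of_mul_lt_mul_left this (by linarith)
  obtain ⟨g, hga, hgb⟩ := exists_between (max_lt h1 hw0)
  rw [max_lt_iff] at hga
  refine ⟨g, hga.1, ?_, ?_⟩
  · have hroot : k * (g₁ + 1) ^ 2 = 4 * g₁ * l := by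
      have : k * (k * (g₁ + 1) ^ 2) = k * (4 * g₁ * l) := by
        have : k * (k * (g₁ + 1) ^ 2) = (k * g₁ + k) ^ 2 := by ring
        rw [this, show k * (4 * g₁ * l) = 4 * l * (k * g₁) by ring, hgk]
        nlinarith
      exact mul_left_cancel₀ (by linarith) this
    have e : g₁ * (k * (g + 1) ^ 2 - 4 * g * l) = k * (g - g₁) * (g * g₁ - 1) := by
      have : g₁ * (k * (g + 1) ^ 2 - 4 * g * l) = g₁ * (k * (g + 1) ^ 2) - g * (4 * g₁ * l) := by ring
      rw [this, ← hroot]; ring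
    have : 0 < k * (g₁ - g) * (g * g₁ - 1) := by
      apply mul_pos (mul_pos (by linarith) (by linarith))
      nlinarith
    have h3 : g₁ * (k * (g + 1) ^ 2 - 4 * g * l) < 0 := by rw [e]; linarith
    have := neg_of_mul_neg_right h3 (show 0 ≤ g₁ by linarith)
    linarith
  · have := hga.2
    rw [sub_lt_iff_lt_add, div_lt_iff₀ (by linarith)] at this
    have e : l - p + 1 = l - k := by linarith
    rw [e]; linarith

lemma young3 (w₁ w₂ w₃ ε K : ℝ) (h1 : 0 ≤ w₁) (h2 : 0 ≤ w₂) (h3 : 0 < w₃) (hw : w₁ + w₂ + w₃ = 1)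
    (hε : 0 < ε) (hK : 0 ≤ K) : ∃ C : ℝ, 0 ≤ C ∧ ∀ X Y D : ℝ, 0 ≤ X → 0 ≤ Y → 0 ≤ D →
      K * (X ^ w₁ * Y ^ w₂ * D ^ w₃) ≤ ε * X + ε * Y + C * D := by
  obtain ⟨M, hM⟩ : ∃ M, M = (K / ε ^ (w₁ + w₂)) ^ (1 / w₃) := ⟨_, rfl⟩
  have hM0 : 0 ≤ M := by rw [hM]; positivity
  refine ⟨M, hM0, fun X Y D hX hY hD => ?_⟩
  have := Real.geom_mean_le_arith_mean3_weighted h1 h2 h3.le (mul_nonneg hε.le hX)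
    (mul_nonneg hε.le hY) (mul_nonneg hM0 hD) hw
  have hMw : M ^ w₃ = K / ε ^ (w₁ + w₂) := by
    rw [hM, ← Real.rpow_mul (by positivity), one_div_mul_cancel h3.ne', Real.rpow_one]
  rw [Real.mul_rpow hε.le hX, Real.mul_rpow hε.le hY, Real.mul_rpow hM0 hD, hMw,
    Real.rpow_add hε] at this
  have e : ε ^ w₁ * X ^ w₁ * (ε ^ w₂ * Y ^ w₂) * (K / (ε ^ w₁ * ε ^ w₂) * D ^ w₃)
      = K * (X ^ w₁ * Y ^ w₂ * D ^ w₃) := by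
    have := Real.rpow_pos_of_pos hε w₁
    have := Real.rpow_pos_of_pos hε w₂
    field_simp
  rw [e] at this
  refine this.trans ?_
  have i1 : w₁ * (ε * X) ≤ 1 * (ε * X) := by gcongr; linarith
  have i2 : w₂ * (ε * Y) ≤ 1 * (ε * Y) := by gcongr; linarith
  have i3 : w₃ * (M * D) ≤ 1 * (M * D) := by gcongr; linarith
  linarith

lemma mixed_le (p l g θ q m : ℝ) (hp : 2 < p) (hl : p - 1 < l) (hg : 1 < g) (hθ : 0 < θ)
    (hθ2 : θ ≤ 2) (hq : q = p * (l + g) / (l - p + 1)) (hm : q ≤ m) (a t z d : ℝ) (ha : 0 ≤ a)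
    (ht : 0 ≤ t) (hz : 0 ≤ z) (hz1 : z ≤ 1) (hd : 0 ≤ d) :
    a ^ (p - θ) * t ^ (g - 1 + θ) * z ^ (m - θ) * d ^ θ ≤
      (t ^ (l + g) * z ^ m) ^ (θ * (g + p - 1) / (p * (l + g))) *
      (t ^ (g - 1) * z ^ m * a ^ p) ^ (1 - θ / p) * (d ^ q) ^ (θ / q) := by
  have hlg : 0 < l + g := by linarith
  have hlp : 0 < l - p + 1 := by linarith
  have hp0 : 0 < p := by linarith
  have hq0 : 0 < q := by rw [hq]; positivity
  have hm0 : 0 < m := by linarith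
  have hθp : θ / p < 1 := by rw [div_lt_one hp0]; linarith
  have hw0 : 0 < θ * (g + p - 1) / (p * (l + g)) := by
    apply div_pos (mul_pos hθ (by linarith)) (by positivity)
  rw [Real.mul_rpow (by positivity) (by positivity), Real.mul_rpow (by positivity) (by positivity),
    Real.mul_rpow (by positivity) (by positivity),
    ← Real.rpow_mul ht, ← Real.rpow_mul hz, ← Real.rpow_mul ht, ← Real.rpow_mul hz,
    ← Real.rpow_mul ha, ← Real.rpow_mul hd]
  have ed : q * (θ / q) = θ := by field_simp
  have ea : p * (1 - θ / p) = p - θ := by field_simp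
  have et : t ^ (g - 1 + θ) = t ^ ((l + g) * (θ * (g + p - 1) / (p * (l + g)))) * t ^ ((g - 1) * (1 - θ / p)) := by
    rw [← Real.rpow_add_of_nonneg ht (by positivity) (mul_nonneg (by linarith) (by linarith))]
    congr 1
    field_simp
    ring
  have ez : z ^ (m - θ) ≤ z ^ (m * (θ * (g + p - 1) / (p * (l + g)))) * z ^ (m * (1 - θ / p)) := by
    rw [← Real.rpow_add_of_nonneg hz (by positivity) (mul_nonneg (by linarith) (by linarith))]
    have e1 : θ * (g + p - 1) / (p * (l + g)) + (1 - θ / p) = 1 - θ / q := by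
      rw [hq]; field_simp; ring
    rw [← mul_add, e1]
    apply Real.rpow_le_rpow_of_exponent_ge' hz hz1
    · rw [← e1]; apply mul_nonneg hm0.le; linarith
    · have : θ / q * q ≤ θ / q * m := by gcongr
      rw [div_mul_cancel₀ _ hq0.ne'] at this
      linarith
  rw [ed, ea, et]
  have : 0 ≤ a ^ (p - θ) * (t ^ ((l + g) * (θ * (g + p - 1) / (p * (l + g)))) * t ^ ((g - 1) * (1 - θ / p))) * d ^ θ := by
    positivity
  have := mul_le_mul_of_nonneg_left ez this
  calc _ = _ := by ring
    _ ≤ _ := this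
    _ = _ := by ring

lemma mixed_young (p l g θ q m K ε : ℝ) (hp : 2 < p) (hl : p - 1 < l) (hg : 1 < g) (hθ : 0 < θ)
    (hθ2 : θ ≤ 2) (hq : q = p * (l + g) / (l - p + 1)) (hm : q ≤ m) (hε : 0 < ε) (hK : 0 ≤ K) :
    ∃ C : ℝ, 0 ≤ C ∧ ∀ a t z d : ℝ, 0 ≤ a → 0 ≤ t → 0 ≤ z → z ≤ 1 → 0 ≤ d →
    K * (a ^ (p - θ) * t ^ (g - 1 + θ) * z ^ (m - θ) * d ^ θ) ≤
      ε * (t ^ (l + g) * z ^ m) + ε * (t ^ (g - 1) * z ^ m * a ^ p) + C * d ^ q := by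
  have hlg : 0 < l + g := by linarith
  have hlp : 0 < l - p + 1 := by linarith
  have hp0 : 0 < p := by linarith
  have hq0 : 0 < q := by rw [hq]; positivity
  have hθp : θ / p < 1 := by rw [div_lt_one hp0]; linarith
  have hw0 : 0 < θ * (g + p - 1) / (p * (l + g)) := by
    apply div_pos (mul_pos hθ (by linarith)) (by positivity)
  have e1 : θ * (g + p - 1) / (p * (l + g)) + (1 - θ / p) + θ / q = 1 := by
    rw [hq]; field_simp; ring
  obtain ⟨C, hC, h⟩ := young3 _ _ _ ε K hw0.le (by linarith) (div_pos hθ hq0) e1 hε hK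
  refine ⟨C, hC, fun a t z d ha ht hz hz1 hd => ?_⟩
  refine le_trans ?_ (h (t ^ (l + g) * z ^ m) (t ^ (g - 1) * z ^ m * a ^ p) (d ^ q)
    (by positivity) (by positivity) (by positivity))
  refine mul_le_mul_of_nonneg_left ?_ hK
  exact mixed_le p l g θ q m hp hl hg hθ hθ2 hq hm a t z d ha ht hz hz1 hd

lemma pointwise_est (p l g q : ℝ) (n : ℕ) (hp : 2 < p) (hl : p - 1 < l) (hg : 1 < g)
    (hgl : (p - 1) * (g + 1) ^ 2 < 4 * g * l)
    (hq : q = p * (l + g) / (l - p + 1)) (hm : q ≤ 2 * n + 2) :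
    ∃ C δ c : ℝ, 0 ≤ C ∧ 0 < δ ∧ ∀ a t z d S W : ℝ, 0 ≤ a → 0 ≤ t → 0 ≤ z → z ≤ 1 → 0 ≤ d →
      S ≤ (p - 1) * a ^ (p - 2) * ((g + 1) / 2 * t ^ ((g - 1) / 2) * z ^ (n + 1) * a
        + (n + 1) * t ^ ((g + 1) / 2) * z ^ n * d) ^ 2 - l * (t ^ (l + g) * z ^ (2 * n + 2)) →
      g * (t ^ (g - 1) * z ^ (2 * n + 2) * a ^ p) - 2 * (n + 1) * (a ^ (p - 1) * t ^ g * z ^ (2 * n + 1) * d)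
        - t ^ (l + g) * z ^ (2 * n + 2) ≤ W →
      S - c * W ≤ - (δ * (t ^ (l + g) * z ^ (2 * n + 2))) + C * d ^ q := by
  have hlt : (p - 1) * (g + 1) ^ 2 / (4 * g) < l := by
    rw [div_lt_iff₀ (by linarith)]; linarith
  obtain ⟨c, hc1, hc2⟩ := exists_between hlt
  rw [div_lt_iff₀ (by linarith)] at hc1
  have hc0 : 0 < c := by
    have : 0 < (p - 1) * (g + 1) ^ 2 := mul_pos (by linarith) (by positivity)
    by_contra hcc
    push Not at hcc
    nlinarith
  obtain ⟨ε, hε⟩ : ∃ ε, ε = min ((l - c) / 4) ((c * g - (p - 1) * (g + 1) ^ 2 / 4) / 2) := ⟨_, rfl⟩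
  have hε0 : 0 < ε := by
    rw [hε]; apply lt_min <;> linarith
  have hε1 : ε ≤ (l - c) / 4 := by rw [hε]; exact min_le_left _ _
  have hε2 : ε ≤ (c * g - (p - 1) * (g + 1) ^ 2 / 4) / 2 := by rw [hε]; exact min_le_right _ _
  have hp1 : 0 < p - 1 := by linarith
  obtain ⟨C₁, hC₁, h₁⟩ := mixed_young p l g 1 q (2 * n + 2)
    ((p - 1) * ((g + 1) * (n + 1)) + c * (2 * (n + 1))) ε hp hl hg
    one_pos (by norm_num) hq hm hε0 (by positivity)
  obtain ⟨C₂, hC₂, h₂⟩ := mixed_young p l g 2 q (2 * n + 2) ((p - 1) * (n + 1) ^ 2) ε hp hl hg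
    two_pos le_rfl hq hm hε0 (by positivity)
  refine ⟨C₁ + C₂, (l - c) / 2, c, by positivity, by linarith, ?_⟩
  intro a t z d S W ha ht hz hz1 hd hS hW
  have i1 := h₁ a t z d ha ht hz hz1 hd
  have i2 := h₂ a t z d ha ht hz hz1 hd
  have ez : z ^ (2 * (n : ℝ) + 2) = z ^ (2 * n + 2) := by rw [← Real.rpow_natCast]; push_cast; rfl
  have ez1 : z ^ (2 * (n : ℝ) + 2 - 1) = z ^ (2 * n + 1) := by
    rw [← Real.rpow_natCast]; push_cast; congr 1; ring
  have ez2 : z ^ (2 * (n : ℝ) + 2 - 2) = z ^ (2 * n) := by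
    rw [← Real.rpow_natCast]; push_cast; congr 1; ring
  rw [ez, ez1, Real.rpow_one, show g - 1 + 1 = g by ring] at i1
  rw [ez, ez2, Real.rpow_two, show g - 1 + 2 = g + 1 by ring] at i2
  have ea1 : a ^ (p - 1) = a ^ (p - 2) * a := by
    rw [← Real.rpow_add_one' ha (by linarith)]; congr 1; ring
  have ea2 : a ^ p = a ^ (p - 2) * a ^ 2 := by
    rw [← Real.rpow_two, ← Real.rpow_add_of_nonneg ha (by linarith) (by norm_num)]; congr 1; ring
  have et1 : t ^ (g - 1) = t ^ ((g - 1) / 2) * t ^ ((g - 1) / 2) := by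
    rw [← Real.rpow_add_of_nonneg ht (by linarith) (by linarith)]; congr 1; ring
  have et2 : t ^ g = t ^ ((g - 1) / 2) * t ^ ((g + 1) / 2) := by
    rw [← Real.rpow_add_of_nonneg ht (by linarith) (by linarith)]; congr 1; ring
  have et3 : t ^ (g + 1) = t ^ ((g + 1) / 2) * t ^ ((g + 1) / 2) := by
    rw [← Real.rpow_add_of_nonneg ht (by linarith) (by linarith)]; congr 1; ring
  have hexp : (p - 1) * a ^ (p - 2) * ((g + 1) / 2 * t ^ ((g - 1) / 2) * z ^ (n + 1) * a
        + (n + 1) * t ^ ((g + 1) / 2) * z ^ n * d) ^ 2 =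
      (p - 1) * (g + 1) ^ 2 / 4 * (t ^ (g - 1) * z ^ (2 * n + 2) * a ^ p)
      + (p - 1) * ((g + 1) * (n + 1)) * (a ^ (p - 1) * t ^ g * z ^ (2 * n + 1) * d)
      + (p - 1) * (n + 1) ^ 2 * (a ^ (p - 2) * t ^ (g + 1) * z ^ (2 * n) * d ^ 2) := by
    rw [ea1, ea2, et1, et2, et3]; ring
  rw [hexp] at hS
  have hX : 0 ≤ t ^ (l + g) * z ^ (2 * n + 2) := by positivity
  have hY : 0 ≤ t ^ (g - 1) * z ^ (2 * n + 2) * a ^ p := by positivity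
  generalize t ^ (l + g) * z ^ (2 * n + 2) = X at *
  generalize t ^ (g - 1) * z ^ (2 * n + 2) * a ^ p = Y at *
  generalize a ^ (p - 1) * t ^ g * z ^ (2 * n + 1) * d = U at *
  generalize a ^ (p - 2) * t ^ (g + 1) * z ^ (2 * n) * d ^ 2 = V at *
  have hcW := mul_le_mul_of_nonneg_left hW hc0.le
  have j1 : ε * X ≤ (l - c) / 4 * X := by gcongr
  have j2 : ε * Y ≤ (c * g - (p - 1) * (g + 1) ^ 2 / 4) / 2 * Y := by gcongr
  linarith

lemma hasDerivAt_spow (β : ℝ) (hβ : 0 < β) (s : ℝ) :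
    HasDerivAt (fun s : ℝ => |s| ^ β * s) ((β + 1) * |s| ^ β) s := by
  rcases lt_trichotomy s 0 with h | h | h
  · have h1 : HasDerivAt (fun s : ℝ => -((-s) ^ (β + 1))) (-((-1) * (β + 1) * (-s) ^ (β + 1 - 1))) s := by
      apply HasDerivAt.neg
      exact (hasDerivAt_neg s).rpow_const (Or.inl (by linarith))
    rw [abs_of_neg h]
    refine (h1.congr_of_eventuallyEq ?_).congr_deriv ?_
    rotate_left
    · rw [add_sub_cancel_right]; ring
    · filter_upwards [gt_mem_nhds h] with y hy
      rw [abs_of_neg hy, Real.rpow_add_one (by linarith)]; ring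
  · subst h
    rw [hasDerivAt_iff_tendsto_slope]
    have : Filter.Tendsto (fun s : ℝ => |s| ^ β) (nhdsWithin 0 {0}ᶜ) (nhds ((β + 1) * |0| ^ β)) := by
      rw [abs_zero, Real.zero_rpow hβ.ne', mul_zero]
      have : Continuous (fun s : ℝ => |s| ^ β) := continuous_abs.rpow_const (fun _ => Or.inr hβ.le)
      have := this.tendsto 0
      rw [abs_zero, Real.zero_rpow hβ.ne'] at this
      exact this.mono_left nhdsWithin_le_nhds
    refine this.congr' ?_
    filter_upwards [self_mem_nhdsWithin] with y hy
    have hy : y ≠ 0 := hy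
    rw [slope_def_field]
    simp [hy]
  · have h1 : HasDerivAt (fun s : ℝ => s ^ (β + 1)) ((1) * (β + 1) * s ^ (β + 1 - 1)) s := by
      exact (hasDerivAt_id s).rpow_const (Or.inl (by simpa using h.ne'))
    rw [abs_of_pos h]
    refine (h1.congr_of_eventuallyEq ?_).congr_deriv ?_
    rotate_left
    · rw [add_sub_cancel_right]; ring
    · filter_upwards [lt_mem_nhds h] with y hy
      rw [abs_of_pos hy, Real.rpow_add_one (by linarith)]

lemma contDiff_spow (β : ℝ) (hβ : 0 < β) : ContDiff ℝ 1 (fun s : ℝ => |s| ^ β * s) := by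
  rw [contDiff_one_iff_deriv]
  refine ⟨fun s => (hasDerivAt_spow β hβ s).differentiableAt, ?_⟩
  have : deriv (fun s : ℝ => |s| ^ β * s) = fun s => (β + 1) * |s| ^ β :=
    funext fun s => (hasDerivAt_spow β hβ s).deriv
  rw [this]
  exact continuous_const.mul (continuous_abs.rpow_const (fun _ => Or.inr hβ.le))

lemma hasGradientAt_test {N : ℕ} (u ζ : EuclideanSpace ℝ (Fin N) → ℝ) (β : ℝ) (hβ : 0 < β) (m : ℕ)
    (x : EuclideanSpace ℝ (Fin N)) (hu : DifferentiableAt ℝ u x) (hζ : DifferentiableAt ℝ ζ x) :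
    HasGradientAt (fun x => |u x| ^ β * u x * ζ x ^ (m + 1))
      (((β + 1) * |u x| ^ β * ζ x ^ (m + 1)) • gradient u x +
        (|u x| ^ β * u x * ((m + 1) * ζ x ^ m)) • gradient ζ x) x := by
  have h1 := hu.hasGradientAt.hasFDerivAt
  have h2 := hζ.hasGradientAt.hasFDerivAt
  rw [hasGradientAt_iff_hasFDerivAt]
  have h3 := (hasDerivAt_spow β hβ (u x)).comp_hasFDerivAt x h1
  have h4 := h3.mul (h2.pow (m + 1))
  refine h4.congr_fderiv ?_
  ext v
  simp
  ring

lemma continuous_gradient {N : ℕ} (u : EuclideanSpace ℝ (Fin N) → ℝ) (hu : ContDiff ℝ 1 u) :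
    Continuous (gradient u) := by
  unfold gradient
  exact (LinearIsometryEquiv.continuous _).comp (hu.continuous_fderiv one_ne_zero)

lemma hcs_gradient {N : ℕ} (u : EuclideanSpace ℝ (Fin N) → ℝ) (hu : HasCompactSupport u) :
    HasCompactSupport (gradient u) := by
  unfold gradient
  exact (hu.fderiv ℝ).comp_left (g := fun L => (InnerProductSpace.toDual ℝ _).symm L) (map_zero _)

lemma smooth_approx {N : ℕ} (φ : EuclideanSpace ℝ (Fin N) → ℝ) (hφ : ContDiff ℝ 1 φ)
    (hc : HasCompactSupport φ) (ε : ℝ) (hε : 0 < ε) :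
    ∃ ψ : EuclideanSpace ℝ (Fin N) → ℝ, ContDiff ℝ (⊤ : ℕ∞) ψ ∧ HasCompactSupport ψ ∧
      (∀ x ∉ Metric.cthickening 1 (tsupport φ), ψ x = 0) ∧
      (∀ x, |ψ x - φ x| ≤ ε) ∧ (∀ x, ‖fderiv ℝ ψ x - fderiv ℝ φ x‖ ≤ ε) := by
  have hcf := hφ.continuous
  have hcd : Continuous (fderiv ℝ φ) := hφ.continuous_fderiv one_ne_zero
  have u1 := hc.uniformContinuous_of_continuous hcf
  have u2 := (hc.fderiv ℝ).uniformContinuous_of_continuous hcd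
  rw [Metric.uniformContinuous_iff] at u1 u2
  obtain ⟨d1, hd1, H1⟩ := u1 ε hε
  obtain ⟨d2, hd2, H2⟩ := u2 ε hε
  obtain ⟨r, hr0, hr⟩ := exists_between (lt_min (lt_min hd1 hd2) one_pos)
  rw [lt_min_iff, lt_min_iff] at hr
  let ρ : ContDiffBump (0 : EuclideanSpace ℝ (Fin N)) := ⟨r / 2, r, by linarith, by linarith⟩
  have hρr : ρ.rOut = r := rfl
  let ψ := convolution (ρ.normed volume) φ (ContinuousLinearMap.lsmul ℝ ℝ) volume
  have hder : ∀ x, fderiv ℝ ψ x = convolution (ρ.normed volume) (fderiv ℝ φ) (ContinuousLinearMap.lsmul ℝ ℝ) volume x := by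
    intro x
    have := (hc.hasFDerivAt_convolution_right (μ := volume) (f := ρ.normed volume) (ContinuousLinearMap.lsmul ℝ ℝ)
      (ρ.continuous_normed.locallyIntegrable) hφ x).fderiv
    refine this.trans ?_
    rfl
  have hsupp : Function.support ψ ⊆ Metric.cthickening 1 (tsupport φ) := by
    refine (support_convolution_subset_swap _).trans ?_
    rintro _ ⟨y, hy, w, hw, rfl⟩
    rw [ρ.support_normed_eq, hρr, mem_ball_zero_iff] at hw
    apply Metric.mem_cthickening_of_dist_le _ y _ _ (subset_tsupport _ hy)
    simp only [dist_eq_norm, add_sub_cancel_left]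
    linarith
  refine ⟨ψ, ?_, ?_, ?_, ?_, ?_⟩
  · exact ρ.hasCompactSupport_normed.contDiff_convolution_left _ ρ.contDiff_normed hcf.locallyIntegrable
  · exact HasCompactSupport.intro (IsCompact.cthickening hc (r := 1)) (fun x hx => by
      by_contra h; exact hx (hsupp h))
  · intro x hx
    by_contra h; exact hx (hsupp h)
  · intro x
    rw [← Real.dist_eq]
    apply ρ.dist_normed_convolution_le hcf.aestronglyMeasurable
    intro y hy
    rw [Metric.mem_ball, hρr] at hy
    exact (H1 (hy.trans hr.1.1)).le
  · intro x
    rw [hder, ← dist_eq_norm]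
    apply ρ.dist_normed_convolution_le hcd.aestronglyMeasurable
    intro y hy
    rw [Metric.mem_ball, hρr] at hy
    exact (H2 (hy.trans hr.1.2)).le

lemma weak_ext {N : ℕ} (F : EuclideanSpace ℝ (Fin N) → EuclideanSpace ℝ (Fin N))
    (f : EuclideanSpace ℝ (Fin N) → ℝ) (hF : Continuous F) (hf : Continuous f)
    (h : ∀ φ : EuclideanSpace ℝ (Fin N) → ℝ, ContDiff ℝ (⊤ : ℕ∞) φ → HasCompactSupport φ →
      ∫ x, (⟪F x, gradient φ x⟫ - f x * φ x) = 0)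
    (φ : EuclideanSpace ℝ (Fin N) → ℝ) (hφ : ContDiff ℝ 1 φ) (hc : HasCompactSupport φ) :
    ∫ x, (⟪F x, gradient φ x⟫ - f x * φ x) = 0 := by
  have hint : ∀ φ : EuclideanSpace ℝ (Fin N) → ℝ, ContDiff ℝ 1 φ → HasCompactSupport φ →
      Integrable (fun x => ⟪F x, gradient φ x⟫ - f x * φ x) := by
    intro φ hφ hc
    apply Continuous.integrable_of_hasCompactSupport
    · exact (hF.inner (continuous_gradient φ hφ)).sub (hf.mul hφ.continuous)
    · apply HasCompactSupport.sub
      · refine (hcs_gradient φ hc).mono ?_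
        intro x hx h0
        apply hx
        simp only [h0, inner_zero_right]
      · exact hc.mul_left
  set K := Metric.cthickening 1 (tsupport φ) with hK
  have hKc : IsCompact K := IsCompact.cthickening hc
  have hKi : IntegrableOn (fun x => ‖F x‖ + |f x|) K :=
    (hF.norm.add hf.abs).continuousOn.integrableOn_compact hKc
  set J := ∫ x in K, (‖F x‖ + |f x|) with hJ
  have hJ0 : 0 ≤ J := integral_nonneg (fun x => by positivity)
  have key : ∀ ε > 0, |∫ x, (⟪F x, gradient φ x⟫ - f x * φ x)| ≤ ε * J := by
    intro ε hε
    obtain ⟨ψ, hψ, hψc, hψ0, h1, h2⟩ := smooth_approx φ hφ hc ε hε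
    have hψ1 : ContDiff ℝ 1 ψ := hψ.of_le (by exact_mod_cast le_top)
    have e0 := h ψ hψ hψc
    have e1 : ∫ x, (⟪F x, gradient φ x⟫ - f x * φ x) =
        ∫ x, ((⟪F x, gradient φ x⟫ - f x * φ x) - (⟪F x, gradient ψ x⟫ - f x * ψ x)) := by
      rw [integral_sub (hint φ hφ hc) (hint ψ hψ1 hψc), e0, sub_zero]
    rw [e1, hJ, ← integral_const_mul, ← integral_indicator hKc.measurableSet, ← Real.norm_eq_abs]
    apply norm_integral_le_of_norm_le
    · exact IntegrableOn.integrable_indicator (hKi.const_mul ε) hKc.measurableSet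
    · refine Filter.Eventually.of_forall fun x => ?_
      by_cases hx : x ∈ K
      · rw [Set.indicator_of_mem hx]
        have e2 : (⟪F x, gradient φ x⟫ - f x * φ x) - (⟪F x, gradient ψ x⟫ - f x * ψ x)
          = f x * (ψ x - φ x) - ⟪F x, gradient ψ x - gradient φ x⟫ := by
          rw [inner_sub_right]; ring
        have e3 : ‖gradient ψ x - gradient φ x‖ ≤ ε := by
          unfold gradient
          rw [← map_sub, LinearIsometryEquiv.norm_map]
          exact h2 x
        rw [e2]
        calc _ ≤ ‖f x * (ψ x - φ x)‖ + ‖⟪F x, gradient ψ x - gradient φ x⟫‖ := norm_sub_le _ _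
          _ ≤ |f x| * ε + ‖F x‖ * ε := by
            gcongr
            · rw [norm_mul, Real.norm_eq_abs, Real.norm_eq_abs]; gcongr; exact h1 x
            · exact (norm_inner_le_norm _ _).trans (by gcongr)
          _ = _ := by ring
      · rw [Set.indicator_of_notMem hx]
        have hx' : x ∉ tsupport φ := fun hh => hx (Metric.self_subset_cthickening _ hh)
        have hφx : φ x = 0 := image_eq_zero_of_notMem_tsupport hx'
        have hψt : tsupport ψ ⊆ K := closure_minimal (fun y hy => by
          by_contra hh; exact hy (hψ0 y hh)) hKc.isClosed
        have g1 : fderiv ℝ φ x = 0 := by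
          by_contra hh; exact hx' (support_fderiv_subset ℝ hh)
        have g2 : fderiv ℝ ψ x = 0 := by
          by_contra hh; exact hx (hψt (support_fderiv_subset ℝ hh))
        simp [gradient, g1, g2, hφx, hψ0 x hx]
  have : |∫ x, (⟪F x, gradient φ x⟫ - f x * φ x)| ≤ 0 := by
    apply le_of_forall_pos_le_add
    intro ε hε
    have h1 := key (ε / (J + 1)) (by positivity)
    refine h1.trans ?_
    rw [div_mul_eq_mul_div, div_le_iff₀ (by positivity)]
    nlinarith
  exact abs_eq_zero.1 (le_antisymm this (abs_nonneg _))

lemma rpow_mul_inner_sq_le {E : Type*} [NormedAddCommGroup E] [InnerProductSpace ℝ E] (p : ℝ) (hp : 2 < p)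
    (v w : E) : ‖v‖ ^ (p - 4) * ⟪v, w⟫ ^ 2 ≤ ‖v‖ ^ (p - 2) * ‖w‖ ^ 2 := by
  rcases eq_or_ne v 0 with rfl | hv
  · simp only [inner_zero_left]
    have : 0 ≤ ‖(0 : E)‖ ^ (p - 2) * ‖w‖ ^ 2 := by positivity
    simpa using this
  · have hv0 : 0 < ‖v‖ := norm_pos_iff.2 hv
    have e : ‖v‖ ^ (p - 2) = ‖v‖ ^ (p - 4) * ‖v‖ ^ 2 := by
      rw [← Real.rpow_two, ← Real.rpow_add hv0]; congr 1; ring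
    rw [e, mul_assoc, ← mul_pow]
    refine mul_le_mul_of_nonneg_left ?_ (by positivity)
    rw [← sq_abs]
    refine pow_le_pow_left₀ (abs_nonneg _) ?_ 2
    exact abs_real_inner_le_norm v w

/-- Energy estimate. -/
lemma energy_est {N : ℕ} (p lam g q : ℝ) (n : ℕ) (hp : 2 < p) (hl : p - 1 < lam) (hg : 1 < g)
    (hgl : (p - 1) * (g + 1) ^ 2 < 4 * g * lam)
    (hq : q = p * (lam + g) / (lam - p + 1)) (hm : q ≤ 2 * n + 2)
    (u : EuclideanSpace ℝ (Fin N) → ℝ) (hu : ContDiff ℝ 1 u)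
    (hweak : ∀ φ : EuclideanSpace ℝ (Fin N) → ℝ,
      ContDiff ℝ 1 φ → HasCompactSupport φ →
      ∫ x, (⟪(‖gradient u x‖ ^ (p - 2)) • gradient u x, gradient φ x⟫ -
        |u x| ^ (lam - 1) * u x * φ x) = 0)
    (hstable : ∀ φ : EuclideanSpace ℝ (Fin N) → ℝ,
      ContDiff ℝ 1 φ → HasCompactSupport φ →
      0 ≤ ∫ x,
        (‖gradient u x‖ ^ (p - 2) * ‖gradient φ x‖ ^ 2 +
          ((p - 2) * ‖gradient u x‖ ^ (p - 4) * ⟪gradient u x, gradient φ x⟫ ^ 2 -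
            lam * |u x| ^ (lam - 1) * φ x ^ 2))) :
    ∃ C : ℝ, 0 ≤ C ∧ ∀ ζ : EuclideanSpace ℝ (Fin N) → ℝ, ContDiff ℝ 1 ζ → HasCompactSupport ζ →
      (∀ x, 0 ≤ ζ x) → (∀ x, ζ x ≤ 1) →
      ∫ x, |u x| ^ (lam + g) * ζ x ^ (2 * n + 2) ≤ C * ∫ x, ‖gradient ζ x‖ ^ q := by
  obtain ⟨C, δ, c, hC, hδ, H⟩ := pointwise_est p lam g q n hp hl hg hgl hq hm
  refine ⟨C / δ, by positivity, fun ζ hζ hζc hζ0 hζ1 => ?_⟩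
  have hq0 : 0 < q := by
    rw [hq]; exact div_pos (mul_pos (by linarith) (by linarith)) (by linarith)
  have hgu := continuous_gradient u hu
  have hgz := continuous_gradient ζ hζ
  have hg2 : 0 < (g - 1) / 2 := by linarith
  have hg1 : 0 < g - 1 := by linarith
  -- test functions
  obtain ⟨ψ, hψ⟩ : ∃ ψ : EuclideanSpace ℝ (Fin N) → ℝ,
    ψ = fun x => |u x| ^ ((g - 1) / 2) * u x * ζ x ^ (n + 1) := ⟨_, rfl⟩
  obtain ⟨φ, hφ⟩ : ∃ φ : EuclideanSpace ℝ (Fin N) → ℝ,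
    φ = fun x => |u x| ^ (g - 1) * u x * ζ x ^ (2 * n + 1 + 1) := ⟨_, rfl⟩
  have hψ1 : ContDiff ℝ 1 ψ := by
    rw [hψ]; exact ((contDiff_spow _ hg2).comp hu).mul (hζ.pow _)
  have hφ1 : ContDiff ℝ 1 φ := by
    rw [hφ]; exact ((contDiff_spow _ hg1).comp hu).mul (hζ.pow _)
  have hpowc : ∀ k : ℕ, HasCompactSupport (fun x => ζ x ^ (k + 1)) := fun k =>
    hζc.comp_left (g := fun s : ℝ => s ^ (k + 1)) (by simp)
  have hψc : HasCompactSupport ψ := by rw [hψ]; exact (hpowc n).mul_left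
  have hφc : HasCompactSupport φ := by rw [hφ]; exact (hpowc _).mul_left
  have hgψ : ∀ x, gradient ψ x = (((g - 1) / 2 + 1) * |u x| ^ ((g - 1) / 2) * ζ x ^ (n + 1)) • gradient u x +
        (|u x| ^ ((g - 1) / 2) * u x * ((n + 1) * ζ x ^ n)) • gradient ζ x := fun x => by
    rw [hψ]
    exact (hasGradientAt_test u ζ _ hg2 n x (hu.differentiable one_ne_zero x)
      (hζ.differentiable one_ne_zero x)).gradient
  have hgφ : ∀ x, gradient φ x = ((g - 1 + 1) * |u x| ^ (g - 1) * ζ x ^ (2 * n + 1 + 1)) • gradient u x +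
        (|u x| ^ (g - 1) * u x * (((2 * n + 1 : ℕ) + 1) * ζ x ^ (2 * n + 1))) • gradient ζ x := fun x => by
    rw [hφ]
    exact (hasGradientAt_test u ζ _ hg1 _ x (hu.differentiable one_ne_zero x)
      (hζ.differentiable one_ne_zero x)).gradient
  have hSpos := hstable ψ hψ1 hψc
  have hWzero := hweak φ hφ1 hφc
  -- integrability
  have hcp2 : Continuous (fun x => ‖gradient u x‖ ^ (p - 2)) :=
    hgu.norm.rpow_const (fun _ => Or.inr (by linarith))
  have hcl1 : Continuous (fun x => |u x| ^ (lam - 1)) :=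
    hu.continuous.abs.rpow_const (fun _ => Or.inr (by linarith))
  have hgψc := continuous_gradient ψ hψ1
  have hI1 : Integrable (fun x => ‖gradient u x‖ ^ (p - 2) * ‖gradient ψ x‖ ^ 2) := by
    apply Continuous.integrable_of_hasCompactSupport
    · exact hcp2.mul (hgψc.norm.pow 2)
    · refine HasCompactSupport.mul_left ?_
      exact (hcs_gradient ψ hψc).comp_left (g := fun v => ‖v‖ ^ 2) (by simp)
  have hI2 : Integrable (fun x => (p - 2) * ‖gradient u x‖ ^ (p - 4) * ⟪gradient u x, gradient ψ x⟫ ^ 2) := by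
    refine (hI1.const_mul (p - 2)).mono' ?_ ?_
    · apply Measurable.aestronglyMeasurable
      have m1 : Measurable (fun x => ‖gradient u x‖ ^ (p - 4)) := hgu.norm.measurable.pow_const _
      exact (m1.const_mul _).mul ((hgu.inner hgψc).pow 2).measurable
    · refine Filter.Eventually.of_forall fun x => ?_
      have hp2 : 0 ≤ p - 2 := by linarith
      rw [Real.norm_of_nonneg (by positivity), mul_assoc]
      exact mul_le_mul_of_nonneg_left (rpow_mul_inner_sq_le p hp _ _) hp2
  have hI3 : Integrable (fun x => lam * |u x| ^ (lam - 1) * ψ x ^ 2) := by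
    apply Continuous.integrable_of_hasCompactSupport
    · exact (continuous_const.mul hcl1).mul (hψ1.continuous.pow 2)
    · refine HasCompactSupport.mul_left ?_
      exact hψc.comp_left (g := fun v => v ^ 2) (by simp)
  have hI4 : Integrable (fun x => ⟪(‖gradient u x‖ ^ (p - 2)) • gradient u x, gradient φ x⟫ -
        |u x| ^ (lam - 1) * u x * φ x) := by
    apply Continuous.integrable_of_hasCompactSupport
    · exact ((hcp2.smul hgu).inner (continuous_gradient φ hφ1)).sub
        ((hcl1.mul hu.continuous).mul hφ1.continuous)
    · apply HasCompactSupport.sub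
      · refine (hcs_gradient φ hφc).mono ?_
        intro x hx h0
        apply hx
        simp only [h0, inner_zero_right]
      · exact hφc.mul_left
  have hI5 : Integrable (fun x => |u x| ^ (lam + g) * ζ x ^ (2 * n + 2)) := by
    apply Continuous.integrable_of_hasCompactSupport
    · exact (hu.continuous.abs.rpow_const (fun _ => Or.inr (by linarith))).mul (hζ.continuous.pow _)
    · exact (hpowc (2 * n + 1)).mul_left
  have hI6 : Integrable (fun x => ‖gradient ζ x‖ ^ q) := by
    apply Continuous.integrable_of_hasCompactSupport
    · exact hgz.norm.rpow_const (fun _ => Or.inr hq0.le)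
    · exact (hcs_gradient ζ hζc).comp_left (g := fun v => ‖v‖ ^ q) (by simp [Real.zero_rpow hq0.ne'])
  have hIS : Integrable (fun x => ‖gradient u x‖ ^ (p - 2) * ‖gradient ψ x‖ ^ 2 +
          ((p - 2) * ‖gradient u x‖ ^ (p - 4) * ⟪gradient u x, gradient ψ x⟫ ^ 2 -
            lam * |u x| ^ (lam - 1) * ψ x ^ 2)) := hI1.add (hI2.sub hI3)
  have hI7 : Integrable (fun x => -(δ * (|u x| ^ (lam + g) * ζ x ^ (2 * n + 2)))) :=
    (hI5.const_mul δ).neg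
  have hmono : ∫ x, ((‖gradient u x‖ ^ (p - 2) * ‖gradient ψ x‖ ^ 2 +
          ((p - 2) * ‖gradient u x‖ ^ (p - 4) * ⟪gradient u x, gradient ψ x⟫ ^ 2 -
            lam * |u x| ^ (lam - 1) * ψ x ^ 2)) -
        c * (⟪(‖gradient u x‖ ^ (p - 2)) • gradient u x, gradient φ x⟫ -
        |u x| ^ (lam - 1) * u x * φ x)) ≤
      ∫ x, (-(δ * (|u x| ^ (lam + g) * ζ x ^ (2 * n + 2))) + C * ‖gradient ζ x‖ ^ q) := by
    apply integral_mono (hIS.sub (hI4.const_mul c)) (hI7.add (hI6.const_mul C))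
    intro x
    refine H ‖gradient u x‖ |u x| (ζ x) ‖gradient ζ x‖ _ _ (norm_nonneg _) (abs_nonneg _) (hζ0 x)
      (hζ1 x) (norm_nonneg _) ?_ ?_
    · have ht := abs_nonneg (u x)
      have hz := hζ0 x
      have hB : |u x| ^ ((g - 1) / 2) * |u x| = |u x| ^ ((g + 1) / 2) := by
        rw [← Real.rpow_add_one' ht (by linarith)]; congr 1; ring
      have hP : ‖gradient ψ x‖ ≤ (g + 1) / 2 * |u x| ^ ((g - 1) / 2) * ζ x ^ (n + 1) * ‖gradient u x‖
        + (n + 1) * |u x| ^ ((g + 1) / 2) * ζ x ^ n * ‖gradient ζ x‖ := by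
        rw [hgψ x]
        refine (norm_add_le _ _).trans (le_of_eq ?_)
        rw [norm_smul, norm_smul, Real.norm_of_nonneg (by positivity), Real.norm_eq_abs, abs_mul, abs_mul,
          abs_of_nonneg (by positivity : 0 ≤ |u x| ^ ((g - 1) / 2)), hB,
          abs_of_nonneg (by positivity : 0 ≤ ((n : ℝ) + 1) * ζ x ^ n)]
        ring
      have h1 := rpow_mul_inner_sq_le p hp (gradient u x) (gradient ψ x)
      have h2 := mul_le_mul_of_nonneg_left h1 (show 0 ≤ p - 2 by linarith)
      have h3 : lam * |u x| ^ (lam - 1) * ψ x ^ 2 = lam * (|u x| ^ (lam + g) * ζ x ^ (2 * n + 2)) := by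
        have e1 : |u x| ^ (lam + g) = |u x| ^ (lam - 1) * (|u x| ^ ((g + 1) / 2)) ^ 2 := by
          rw [← Real.rpow_two, ← Real.rpow_mul ht, ← Real.rpow_add_of_nonneg ht (by linarith) (by linarith)]
          congr 1; ring
        rw [e1, ← hB, mul_pow _ |u x|, sq_abs, hψ]
        ring
      have h4 : (p - 1) * ‖gradient u x‖ ^ (p - 2) * ‖gradient ψ x‖ ^ 2 ≤
          (p - 1) * ‖gradient u x‖ ^ (p - 2) * ((g + 1) / 2 * |u x| ^ ((g - 1) / 2) * ζ x ^ (n + 1) * ‖gradient u x‖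
        + (n + 1) * |u x| ^ ((g + 1) / 2) * ζ x ^ n * ‖gradient ζ x‖) ^ 2 := by
        have : 0 ≤ p - 1 := by linarith
        gcongr
      beta_reduce
      rw [h3]
      linarith
    · have ht := abs_nonneg (u x)
      have hz := hζ0 x
      have ha := norm_nonneg (gradient u x)
      have hB : |u x| ^ (g - 1) * |u x| = |u x| ^ g := by
        rw [← Real.rpow_add_one' ht (by linarith)]; congr 1; ring
      have ea1 : ‖gradient u x‖ ^ (p - 1) = ‖gradient u x‖ ^ (p - 2) * ‖gradient u x‖ := by
        rw [← Real.rpow_add_one' ha (by linarith)]; congr 1; ring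
      have ea2 : ‖gradient u x‖ ^ p = ‖gradient u x‖ ^ (p - 2) * ‖gradient u x‖ ^ 2 := by
        rw [← Real.rpow_two, ← Real.rpow_add_of_nonneg ha (by linarith) (by norm_num)]; congr 1; ring
      have h3 : |u x| ^ (lam - 1) * u x * φ x = |u x| ^ (lam + g) * ζ x ^ (2 * n + 2) := by
        have e1 : |u x| ^ (lam + g) = |u x| ^ (lam - 1) * |u x| ^ (g - 1) * |u x| ^ 2 := by
          rw [← Real.rpow_two, ← Real.rpow_add_of_nonneg ht (by linarith) (by linarith),
            ← Real.rpow_add_of_nonneg ht (by linarith) (by linarith)]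
          congr 1; ring
        rw [e1, sq_abs, hφ]
        ring
      have hin : -(|u x| ^ g * (‖gradient u x‖ * ‖gradient ζ x‖)) ≤
          |u x| ^ (g - 1) * u x * ⟪gradient u x, gradient ζ x⟫ := by
        apply neg_le_of_abs_le
        rw [abs_mul, abs_mul, abs_of_nonneg (by positivity : 0 ≤ |u x| ^ (g - 1)), hB]
        gcongr
        exact abs_real_inner_le_norm _ _
      rw [h3, real_inner_smul_left, hgφ x, inner_add_right, real_inner_smul_right, real_inner_smul_right,
        real_inner_self_eq_norm_sq]
      have h5 := mul_le_mul_of_nonneg_left hin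
        (by positivity : 0 ≤ ‖gradient u x‖ ^ (p - 2) * ((2 * n + 2) * ζ x ^ (2 * n + 1)))
      rw [ea1, ea2]
      push_cast
      have e6 : ζ x ^ (2 * n + 1 + 1) = ζ x ^ (2 * n + 2) := rfl
      rw [e6]
      linarith
  rw [integral_sub hIS (hI4.const_mul c), integral_const_mul, hWzero, mul_zero, sub_zero,
    integral_add hI7 (hI6.const_mul C), integral_neg, integral_const_mul,
    integral_const_mul] at hmono
  rw [div_mul_eq_mul_div, le_div_iff₀ hδ]
  have := hSpos.trans hmono
  linarith

/-- **Lemma 3.2, Liouville theorem for stable solutions.** Let `p > 2`, with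
`p - 1 < λ`, and `λ < Λ_c(N, p)` in case `N > p(p+3)/(p-1)`. If `u ∈ C¹(ℝ^N)` is a
stable weak solution of `-Δ_p u = |u|^{λ-1} u` on all of `ℝ^N`, then `u ≡ 0`. -/
theorem liouville_stable
    (N : ℕ) (p lam : ℝ) (hp : 2 < p)
    (hlam₁ : p - 1 < lam)
    (hlam₂ : (N : ℝ) > p * (p + 3) / (p - 1) → lam < LambdaC N p)
    (u : EuclideanSpace ℝ (Fin N) → ℝ) (hu : ContDiff ℝ 1 u)
    -- `u` is a weak solution of `-Δ_p u = |u|^{λ-1} u` on `ℝ^N`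
    (hweak : ∀ φ : EuclideanSpace ℝ (Fin N) → ℝ,
      ContDiff ℝ (⊤ : ℕ∞) φ → HasCompactSupport φ →
      ∫ x, ‖gradient u x‖ ^ (p - 2) * ⟪gradient u x, gradient φ x⟫ =
        ∫ x, |u x| ^ (lam - 1) * u x * φ x)
    -- `u` is stable
    (hstable : ∀ φ : EuclideanSpace ℝ (Fin N) → ℝ,
      ContDiff ℝ 1 φ → HasCompactSupport φ →
      0 ≤ ∫ x,
        (‖gradient u x‖ ^ (p - 2) * ‖gradient φ x‖ ^ 2 +
          ((p - 2) * ‖gradient u x‖ ^ (p - 4) * ⟪gradient u x, gradient φ x⟫ ^ 2 -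
            lam * |u x| ^ (lam - 1) * φ x ^ 2))) :
    ∀ x, u x = 0 := by
  obtain ⟨g, hg, hgl, hgN⟩ := exists_gamma N p lam hp hlam₁ hlam₂
  obtain ⟨q, hq⟩ : ∃ q, q = p * (lam + g) / (lam - p + 1) := ⟨_, rfl⟩
  have hqN : (N : ℝ) < q := by rw [hq, lt_div_iff₀ (by linarith)]; exact hgN
  have hq0 : 0 < q := lt_of_le_of_lt (Nat.cast_nonneg N) hqN
  obtain ⟨n, hn⟩ := exists_nat_ge q
  have hgu := continuous_gradient u hu
  have hcp2 : Continuous (fun x => ‖gradient u x‖ ^ (p - 2)) :=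
    hgu.norm.rpow_const (fun _ => Or.inr (by linarith))
  have hcl1 : Continuous (fun x => |u x| ^ (lam - 1)) :=
    hu.continuous.abs.rpow_const (fun _ => Or.inr (by linarith))
  have hF : Continuous (fun x => (‖gradient u x‖ ^ (p - 2)) • gradient u x) := hcp2.smul hgu
  have hf : Continuous (fun x => |u x| ^ (lam - 1) * u x) := hcl1.mul hu.continuous
  have hw := weak_ext _ _ hF hf (fun φ hφ hφc => by
    have hφ1 : ContDiff ℝ 1 φ := hφ.of_le (by exact_mod_cast le_top)
    rw [integral_sub, sub_eq_zero]
    · simp_rw [real_inner_smul_left]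
      exact hweak φ hφ hφc
    · apply Continuous.integrable_of_hasCompactSupport
      · exact hF.inner (continuous_gradient φ hφ1)
      · refine (hcs_gradient φ hφc).mono ?_
        intro x hx h0
        apply hx
        simp only [h0, inner_zero_right]
    · apply Continuous.integrable_of_hasCompactSupport
      · exact hf.mul hφ1.continuous
      · exact hφc.mul_left)
  obtain ⟨C, hC, H⟩ := energy_est p lam g q n hp hlam₁ hg hgl hq (by
    have : (0 : ℝ) ≤ n := Nat.cast_nonneg n
    linarith) u hu hw hstable
  -- cutoff functions
  let χ : ContDiffBump (0 : EuclideanSpace ℝ (Fin N)) := ⟨1, 2, by norm_num, by norm_num⟩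
  have hχ1 : ContDiff ℝ 1 χ := χ.contDiff
  have hχ2 : χ.rOut = 2 := rfl
  have hχi : χ.rIn = 1 := rfl
  obtain ⟨M, hM⟩ : ∃ M, ∀ x, ‖gradient χ x‖ ≤ M :=
    (continuous_gradient _ hχ1).bounded_above_of_compact_support (hcs_gradient _ χ.hasCompactSupport)
  have hM0 : 0 ≤ M := (norm_nonneg _).trans (hM 0)
  let Z : ℝ → EuclideanSpace ℝ (Fin N) → ℝ := fun R x => χ (R⁻¹ • x)
  have hZ1 : ∀ R, ContDiff ℝ 1 (Z R) := fun R => hχ1.comp (contDiff_const_smul _)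
  have hZout : ∀ R > 0, ∀ x, x ∉ Metric.closedBall (0 : EuclideanSpace ℝ (Fin N)) (2 * R) → Z R x = 0 := by
    intro R hR x hx
    apply χ.zero_of_le_dist
    rw [mem_closedBall_zero_iff, not_le] at hx
    rw [hχ2, dist_zero_right, norm_smul, norm_inv, Real.norm_of_nonneg hR.le, le_inv_mul_iff₀ hR]
    linarith
  have hZin : ∀ R > 0, ∀ x, ‖x‖ ≤ R → Z R x = 1 := by
    intro R hR x hx
    apply χ.one_of_mem_closedBall
    rw [mem_closedBall_zero_iff, hχi, norm_smul, norm_inv, Real.norm_of_nonneg hR.le, inv_mul_le_iff₀ hR]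
    linarith
  have hZc : ∀ R > 0, HasCompactSupport (Z R) := fun R hR =>
    HasCompactSupport.intro (isCompact_closedBall _ _) (hZout R hR)
  have hZg : ∀ R > 0, ∀ x, ‖gradient (Z R) x‖ ≤ M / R := by
    intro R hR x
    have h1 := ((hχ1.differentiable one_ne_zero (R⁻¹ • x)).hasFDerivAt).comp x
      ((hasFDerivAt_id x).const_smul R⁻¹)
    have h2 : fderiv ℝ (Z R) x = R⁻¹ • fderiv ℝ χ (R⁻¹ • x) := by
      refine h1.fderiv.trans ?_
      ext v; simp
    have h3 : gradient (Z R) x = R⁻¹ • gradient χ (R⁻¹ • x) := by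
      unfold gradient
      rw [h2]; simp
    rw [h3, norm_smul, norm_inv, Real.norm_of_nonneg hR.le, div_eq_inv_mul]
    gcongr
    exact hM _
  obtain ⟨V, hV⟩ : ∃ V, V = (volume (Metric.ball (0 : EuclideanSpace ℝ (Fin N)) 1)).toReal := ⟨_, rfl⟩
  have hbound : ∀ R > 0, ∫ x, ‖gradient (Z R) x‖ ^ q ≤ (M ^ q * 2 ^ N * V) * R ^ (-(q - N)) := by
    intro R hR
    have hsupp : ∀ x, x ∉ Metric.closedBall (0 : EuclideanSpace ℝ (Fin N)) (2 * R) →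
        ‖gradient (Z R) x‖ ^ q = 0 := by
      intro x hx
      have ht : tsupport (Z R) ⊆ Metric.closedBall 0 (2 * R) := closure_minimal (fun y hy => by
          by_contra hh; exact hy (hZout R hR y hh)) Metric.isClosed_closedBall
      have g2 : fderiv ℝ (Z R) x = 0 := by
        by_contra hh; exact hx (ht (support_fderiv_subset ℝ hh))
      simp [gradient, g2, Real.zero_rpow hq0.ne']
    rw [← setIntegral_eq_integral_of_forall_compl_eq_zero hsupp]
    have hfin : volume (Metric.closedBall (0 : EuclideanSpace ℝ (Fin N)) (2 * R)) < ⊤ :=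
      measure_closedBall_lt_top
    have h1 := norm_setIntegral_le_of_norm_le_const (C := (M / R) ^ q)
      (f := fun x => ‖gradient (Z R) x‖ ^ q) hfin (fun x _ => by
        rw [Real.norm_of_nonneg (by positivity)]
        gcongr
        exact hZg R hR x)
    refine (Real.le_norm_self _).trans (h1.trans (le_of_eq ?_))
    rw [measureReal_def, Measure.addHaar_closedBall _ _ (by positivity), ENNReal.toReal_mul,
      ENNReal.toReal_ofReal (by positivity), ← hV, finrank_euclideanSpace_fin,
      Real.div_rpow hM0 hR.le, neg_sub, Real.rpow_sub hR, Real.rpow_natCast, mul_pow]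
    ring
  -- conclusion
  by_contra hcon
  push Not at hcon
  obtain ⟨x₀, hx₀⟩ := hcon
  obtain ⟨R₀, hR₀⟩ : ∃ R₀, R₀ = ‖x₀‖ + 1 := ⟨_, rfl⟩
  have hR₀pos : 0 < R₀ := by rw [hR₀]; positivity
  have hcont : ∀ R, Continuous (fun x => |u x| ^ (lam + g) * Z R x ^ (2 * n + 2)) := fun R =>
    (hu.continuous.abs.rpow_const (fun _ => Or.inr (by linarith))).mul ((hZ1 R).continuous.pow _)
  have hcs : ∀ R > 0, HasCompactSupport (fun x => |u x| ^ (lam + g) * Z R x ^ (2 * n + 2)) := fun R hR =>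
    ((hZc R hR).comp_left (g := fun s : ℝ => s ^ (2 * n + 2)) (by simp)).mul_left
  have hZ0 : ∀ R x, 0 ≤ Z R x := fun R x => χ.nonneg
  have hZle : ∀ R x, Z R x ≤ 1 := fun R x => χ.le_one
  have hI0 : 0 < ∫ x, |u x| ^ (lam + g) * Z R₀ x ^ (2 * n + 2) := by
    apply (hcont R₀).integral_pos_of_hasCompactSupport_nonneg_nonzero (hcs R₀ hR₀pos) (x := x₀)
    · intro x
      have := hZ0 R₀ x
      change 0 ≤ |u x| ^ (lam + g) * Z R₀ x ^ (2 * n + 2)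
      positivity
    · rw [hZin R₀ hR₀pos x₀ (by linarith)]
      have : 0 < |u x₀| := abs_pos.2 hx₀
      have := Real.rpow_pos_of_pos this (lam + g)
      simpa using this.ne'
  have hle : ∀ R ≥ 2 * R₀, ∫ x, |u x| ^ (lam + g) * Z R₀ x ^ (2 * n + 2) ≤
      C * ((M ^ q * 2 ^ N * V) * R ^ (-(q - N))) := by
    intro R hR
    have hRpos : 0 < R := by linarith
    calc _ ≤ ∫ x, |u x| ^ (lam + g) * Z R x ^ (2 * n + 2) := by
          apply integral_mono ((hcont _).integrable_of_hasCompactSupport (hcs _ hR₀pos))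
            ((hcont _).integrable_of_hasCompactSupport (hcs _ hRpos))
          intro x
          have h0 := hZ0 R₀ x
          have : Z R₀ x ≤ Z R x := by
            by_cases hx : x ∈ Metric.closedBall (0 : EuclideanSpace ℝ (Fin N)) (2 * R₀)
            · rw [mem_closedBall_zero_iff] at hx
              rw [hZin R hRpos x (hx.trans hR)]
              exact hZle _ _
            · rw [hZout R₀ hR₀pos x hx]
              exact hZ0 _ _
          change |u x| ^ (lam + g) * Z R₀ x ^ (2 * n + 2) ≤ |u x| ^ (lam + g) * Z R x ^ (2 * n + 2)
          gcongr
      _ ≤ C * ∫ x, ‖gradient (Z R) x‖ ^ q := H (Z R) (hZ1 R) (hZc R hRpos) (hZ0 R) (hZle R)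
      _ ≤ _ := mul_le_mul_of_nonneg_left (hbound R hRpos) hC
  have hlim : Filter.Tendsto (fun R : ℝ => C * ((M ^ q * 2 ^ N * V) * R ^ (-(q - N)))) Filter.atTop (nhds 0) := by
    have := (tendsto_rpow_neg_atTop (show 0 < q - N by linarith)).const_mul (M ^ q * 2 ^ N * V)
    simpa using this.const_mul C
  have := ge_of_tendsto hlim (Filter.eventually_atTop.2 ⟨2 * R₀, hle⟩)
  linarith
end

section
/- Let p > 2 and assume p − 1 < λ < ∞ if N ≤ p, and p − 1 < λ < (N(p−1)+p)/(N−p) if N > p. If u ∈ C^1(ℝ^N) is a weak solution of −Δ_p u = |u|^{λ−1} u on all of ℝ^N which is stable outside a compact set K ⊂ ℝ^N, then u ≡ 0. -/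
open MeasureTheory
open scoped RealInnerProductSpace

namespace LiouvilleAux

open Filter Topology Set Metric

/-- Euclidean space of dimension `N`. -/
abbrev EE (N : ℕ) := EuclideanSpace ℝ (Fin N)

variable {N : ℕ}

lemma continuous_grad {u : EE N → ℝ} (hu : ContDiff ℝ 1 u) : Continuous (gradient u) :=
  (LinearIsometryEquiv.continuous _).comp (hu.continuous_fderiv one_ne_zero)

lemma grad_eq_iff (u : EE N → ℝ) (x v : EE N)
    (h : HasFDerivAt u (InnerProductSpace.toDual ℝ (EE N) v) x) : gradient u x = v :=
  (hasGradientAt_iff_hasFDerivAt.2 h).gradient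

lemma hasFDerivAt_grad {u : EE N → ℝ} {x : EE N} (hu : DifferentiableAt ℝ u x) :
    HasFDerivAt u (InnerProductSpace.toDual ℝ (EE N) (gradient u x)) x :=
  hasGradientAt_iff_hasFDerivAt.1 hu.hasGradientAt

lemma grad_mul {f g : EE N → ℝ} {x : EE N} (hf : DifferentiableAt ℝ f x)
    (hg : DifferentiableAt ℝ g x) :
    gradient (fun y => f y * g y) x = f x • gradient g x + g x • gradient f x := by
  apply grad_eq_iff
  simpa using (hasFDerivAt_grad hf).fun_mul (hasFDerivAt_grad hg)

lemma grad_sub {f g : EE N → ℝ} {x : EE N} (hf : DifferentiableAt ℝ f x)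
    (hg : DifferentiableAt ℝ g x) :
    gradient (fun y => f y - g y) x = gradient f x - gradient g x := by
  apply grad_eq_iff
  simpa using (hasFDerivAt_grad hf).fun_sub (hasFDerivAt_grad hg)

lemma grad_pow {f : EE N → ℝ} {x : EE N} (hf : DifferentiableAt ℝ f x) (k : ℕ) :
    gradient (fun y => f y ^ k) x = (k * f x ^ (k - 1)) • gradient f x := by
  apply grad_eq_iff
  simpa using (hasFDerivAt_grad hf).pow k

lemma grad_comp_smul {f : EE N → ℝ} (hf : Differentiable ℝ f) (s : ℝ) (x : EE N) :
    gradient (fun y => f (s • y)) x = s • gradient f (s • x) := by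
  apply grad_eq_iff
  have h1 := hasFDerivAt_grad (hf (s • x))
  have h2 : HasFDerivAt (fun y : EE N => s • y) (s • ContinuousLinearMap.id ℝ (EE N)) x :=
    (hasFDerivAt_id x).const_smul s
  have h3 := h1.comp x h2
  have e : (InnerProductSpace.toDual ℝ (EE N) (gradient f (s • x))).comp
      (s • ContinuousLinearMap.id ℝ (EE N)) =
      InnerProductSpace.toDual ℝ (EE N) (s • gradient f (s • x)) := by
    ext v
    simp [inner_smul_left, inner_smul_right]
  rw [← e]
  exact h3

lemma inner_grad_right (v : EE N) (f : EE N → ℝ) (x : EE N) :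
    ⟪v, gradient f x⟫ = fderiv ℝ f x v := by
  rw [real_inner_comm, inner_gradient_left]

lemma norm_grad (f : EE N → ℝ) (x : EE N) : ‖gradient f x‖ = ‖fderiv ℝ f x‖ := by
  simp [gradient]

lemma grad_zero_of_notMem {f : EE N → ℝ} {x : EE N} (hx : x ∉ tsupport f) :
    gradient f x = 0 := by
  have : fderiv ℝ f x = 0 := by
    by_contra h
    exact hx (support_fderiv_subset ℝ (f := f) h)
  simp [gradient, this]

open scoped Convolution in
/-- Mollification. -/
lemma exists_mollify {φ : EE N → ℝ} (hφ : ContDiff ℝ 1 φ) (hc : HasCompactSupport φ) :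
    ∃ (ψ : ℕ → EE N → ℝ) (R C : ℝ), (∀ n, ContDiff ℝ (⊤ : ℕ∞) (ψ n)) ∧
      (∀ n, tsupport (ψ n) ⊆ closedBall 0 R) ∧
      (∀ n x, |ψ n x| ≤ C) ∧ (∀ n x, ‖fderiv ℝ (ψ n) x‖ ≤ C) ∧
      (∀ x, Tendsto (fun n => ψ n x) atTop (𝓝 (φ x))) ∧
      (∀ x, Tendsto (fun n => fderiv ℝ (ψ n) x) atTop (𝓝 (fderiv ℝ φ x))) := by
  let b : ℕ → ContDiffBump (0 : EE N) := fun n =>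
    { rIn := 1 / ((n : ℝ) + 1) / 2, rOut := 1 / ((n : ℝ) + 1), rIn_pos := by positivity,
      rIn_lt_rOut := by apply half_lt_self; positivity }
  have hb : Tendsto (fun n => (b n).rOut) atTop (𝓝 0) := tendsto_one_div_add_atTop_nhds_zero_nat
  have hb1 : ∀ n, (b n).rOut ≤ 1 := fun n => by
    change 1 / ((n : ℝ) + 1) ≤ 1
    rw [div_le_one (by positivity)]
    have : (0 : ℝ) ≤ n := Nat.cast_nonneg n
    linarith
  have hcf : Continuous (fderiv ℝ φ) := hφ.continuous_fderiv one_ne_zero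
  obtain ⟨R, hR⟩ := hc.isCompact.isBounded.subset_closedBall (0 : EE N)
  obtain ⟨C1, hC1⟩ := hc.exists_bound_of_continuous hφ.continuous
  obtain ⟨C2, hC2⟩ := (hc.fderiv ℝ).exists_bound_of_continuous hcf
  have hC1' : 0 ≤ C1 := (norm_nonneg _).trans (hC1 0)
  have hC2' : 0 ≤ C2 := (norm_nonneg _).trans (hC2 0)
  let ψ : ℕ → EE N → ℝ := fun n =>
    ((b n).normed volume ⋆[ContinuousLinearMap.lsmul ℝ ℝ, volume] φ)
  have hli : ∀ n, LocallyIntegrable ((b n).normed (volume : Measure (EE N))) :=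
    fun n => (b n).continuous_normed.locallyIntegrable
  have hfd : ∀ n x, fderiv ℝ (ψ n) x =
      ((b n).normed volume ⋆[ContinuousLinearMap.lsmul ℝ ℝ, volume] (fderiv ℝ φ)) x := by
    intro n x
    have := (hc.hasFDerivAt_convolution_right (ContinuousLinearMap.lsmul ℝ ℝ) (hli n) hφ x).fderiv
    rw [this, convolution_def, convolution_def]
    congr 1
  refine ⟨ψ, R + 1, C1 + C2, ?_, ?_, ?_, ?_, ?_, ?_⟩
  · intro n
    exact (b n).hasCompactSupport_normed.contDiff_convolution_left _
      (b n).contDiff_normed hφ.continuous.locallyIntegrable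
  · intro n
    refine closure_minimal ?_ isClosed_closedBall
    refine (support_convolution_subset _).trans ?_
    rintro _ ⟨y, hy, z, hz, rfl⟩
    rw [ContDiffBump.support_normed_eq] at hy
    have h1 : ‖y‖ < 1 := (mem_ball_zero_iff.1 hy).trans_le (hb1 n)
    have h2 : ‖z‖ ≤ R := mem_closedBall_zero_iff.1 (hR (subset_closure hz))
    rw [mem_closedBall_zero_iff]
    exact (norm_add_le y z).trans (by linarith)
  · intro n x
    have := dist_convolution_le (g := φ) (x₀ := x) (z₀ := 0) hC1' (b n).support_normed_eq.subset
      (b n).nonneg_normed (b n).integral_normed (μ := volume) hφ.continuous.aestronglyMeasurable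
      (fun y _ => by simpa using hC1 y)
    rw [dist_zero_right] at this
    exact this.trans (by linarith)
  · intro n x
    rw [hfd]
    have := dist_convolution_le (g := fderiv ℝ φ) (x₀ := x) (z₀ := 0) hC2'
      (b n).support_normed_eq.subset
      (b n).nonneg_normed (b n).integral_normed (μ := volume) hcf.aestronglyMeasurable
      (fun y _ => by simpa using hC2 y)
    rw [dist_zero_right] at this
    exact this.trans (by linarith)
  · intro x
    exact ContDiffBump.convolution_tendsto_right_of_continuous hb hφ.continuous x
  · intro x
    simp_rw [hfd]
    exact ContDiffBump.convolution_tendsto_right_of_continuous hb hcf x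

/-- The weak formulation extends to `C¹` test functions. -/
lemma weak_C1 {V : EE N → EE N} {f : EE N → ℝ} (hV : Continuous V) (hf : Continuous f)
    (h : ∀ φ : EE N → ℝ, ContDiff ℝ (⊤ : ℕ∞) φ → HasCompactSupport φ →
      ∫ x, ⟪V x, gradient φ x⟫ = ∫ x, f x * φ x)
    {φ : EE N → ℝ} (hφ : ContDiff ℝ 1 φ) (hc : HasCompactSupport φ) :
    ∫ x, ⟪V x, gradient φ x⟫ = ∫ x, f x * φ x := by
  obtain ⟨ψ, R, C, h1, h2, h3, h4, h5, h6⟩ := exists_mollify hφ hc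
  have hK : IsCompact (closedBall (0 : EE N) R) := isCompact_closedBall _ _
  have hψ : ∀ n, HasCompactSupport (ψ n) := fun n =>
    hK.of_isClosed_subset (isClosed_tsupport _) (h2 n)
  have t1 : Tendsto (fun n => ∫ x, ⟪V x, gradient (ψ n) x⟫) atTop
      (𝓝 (∫ x, ⟪V x, gradient φ x⟫)) := by
    refine tendsto_integral_of_dominated_convergence
      ((closedBall (0 : EE N) R).indicator (fun x => ‖V x‖ * C)) ?_ ?_ ?_ ?_
    · intro n
      exact (hV.inner (continuous_grad ((h1 n).of_le (by exact_mod_cast le_top)))).aestronglyMeasurable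
    · rw [integrable_indicator_iff measurableSet_closedBall]
      exact (hV.norm.mul continuous_const).continuousOn.integrableOn_compact hK
    · intro n
      refine Eventually.of_forall fun x => ?_
      by_cases hx : x ∈ closedBall (0 : EE N) R
      · rw [indicator_of_mem hx]
        refine (norm_inner_le_norm _ _).trans ?_
        rw [norm_grad]
        exact mul_le_mul_of_nonneg_left (h4 n x) (norm_nonneg _)
      · rw [indicator_of_notMem hx, grad_zero_of_notMem (fun hx' => hx (h2 n hx'))]
        simp
    · refine Eventually.of_forall fun x => ?_
      simp_rw [inner_grad_right]
      exact ((ContinuousLinearMap.apply ℝ ℝ (V x)).continuous.tendsto _).comp (h6 x)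
  have t2 : Tendsto (fun n => ∫ x, f x * ψ n x) atTop (𝓝 (∫ x, f x * φ x)) := by
    refine tendsto_integral_of_dominated_convergence
      ((closedBall (0 : EE N) R).indicator (fun x => ‖f x‖ * C)) ?_ ?_ ?_ ?_
    · intro n
      exact (hf.mul (h1 n).continuous).aestronglyMeasurable
    · rw [integrable_indicator_iff measurableSet_closedBall]
      exact (hf.norm.mul continuous_const).continuousOn.integrableOn_compact hK
    · intro n
      refine Eventually.of_forall fun x => ?_
      by_cases hx : x ∈ closedBall (0 : EE N) R
      · rw [indicator_of_mem hx, norm_mul]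
        exact mul_le_mul_of_nonneg_left (h3 n x) (norm_nonneg _)
      · rw [indicator_of_notMem hx, image_eq_zero_of_notMem_tsupport (fun hx' => hx (h2 n hx'))]
        simp
    · refine Eventually.of_forall fun x => ?_
      exact (h5 x).const_mul _
  have : ∀ n, ∫ x, ⟪V x, gradient (ψ n) x⟫ = ∫ x, f x * ψ n x := fun n => h _ (h1 n) (hψ n)
  simp_rw [this] at t1
  exact tendsto_nhds_unique t1 t2

lemma young3 {θ₁ θ₂ θ₃ : ℝ} (h1 : 0 ≤ θ₁) (h2 : 0 ≤ θ₂) (h3 : 0 < θ₃) (hs : θ₁ + θ₂ + θ₃ = 1)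
    {ε Kc : ℝ} (hε : 0 < ε) (hK : 0 ≤ Kc) :
    ∃ C : ℝ, 0 ≤ C ∧ ∀ X Y Z : ℝ, 0 ≤ X → 0 ≤ Y → 0 ≤ Z →
      Kc * (X ^ θ₁ * Y ^ θ₂ * Z ^ θ₃) ≤ ε * X + ε * Y + C * Z := by
  have hD : 0 ≤ Kc * ε ^ (θ₃ - 1) := by positivity
  refine ⟨(Kc * ε ^ (θ₃ - 1)) ^ (1 / θ₃), by positivity, ?_⟩
  intro X Y Z hX hY hZ
  set C := (Kc * ε ^ (θ₃ - 1)) ^ (1 / θ₃) with hC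
  have hC0 : 0 ≤ C := by positivity
  have hCθ : C ^ θ₃ = Kc * ε ^ (θ₃ - 1) := by
    rw [hC, ← Real.rpow_mul hD, one_div, inv_mul_cancel₀ h3.ne', Real.rpow_one]
  have key := Real.geom_mean_le_arith_mean3_weighted h1 h2 h3.le
    (mul_nonneg hε.le hX) (mul_nonneg hε.le hY) (mul_nonneg hC0 hZ) hs
  rw [Real.mul_rpow hε.le hX, Real.mul_rpow hε.le hY, Real.mul_rpow hC0 hZ, hCθ] at key
  have hεp : ε ^ θ₁ * ε ^ θ₂ * ε ^ (θ₃ - 1) = 1 := by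
    rw [← Real.rpow_add hε, ← Real.rpow_add hε]
    have : θ₁ + θ₂ + (θ₃ - 1) = 0 := by linarith
    rw [this, Real.rpow_zero]
  have e : ε ^ θ₁ * X ^ θ₁ * (ε ^ θ₂ * Y ^ θ₂) * (Kc * ε ^ (θ₃ - 1) * Z ^ θ₃) =
      Kc * (X ^ θ₁ * Y ^ θ₂ * Z ^ θ₃) := by
    calc _ = (ε ^ θ₁ * ε ^ θ₂ * ε ^ (θ₃ - 1)) * (Kc * (X ^ θ₁ * Y ^ θ₂ * Z ^ θ₃)) := by ring
      _ = _ := by rw [hεp, one_mul]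
  rw [e] at key
  have b1 : θ₁ * (ε * X) ≤ ε * X := mul_le_of_le_one_left (by positivity) (by linarith)
  have b2 : θ₂ * (ε * Y) ≤ ε * Y := mul_le_of_le_one_left (by positivity) (by linarith)
  have b3 : θ₃ * (C * Z) ≤ C * Z := mul_le_of_le_one_left (by positivity) (by linarith)
  linarith

lemma pw_young {p l q : ℝ} (hp : 2 < p) (hl : p < l) (hq0 : 0 < q) (hq : 1 / q = 1 / p - 1 / l)
    {j k : ℕ} (hj1 : 1 ≤ j) (hj2 : j ≤ 2) (hk : q ≤ 2 * k) (hk1 : 1 ≤ k)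
    {ε Kc : ℝ} (hε : 0 < ε) (hK : 0 ≤ Kc) :
    ∃ C : ℝ, 0 ≤ C ∧ ∀ a b c ξ : ℝ, 0 ≤ a → 0 ≤ b → 0 ≤ c → 0 ≤ ξ → ξ ≤ 1 →
      Kc * (a ^ (p - j) * b ^ j * c ^ j * ξ ^ (2 * k - j)) ≤
        ε * (a ^ p * ξ ^ (2 * k)) + ε * (b ^ l * ξ ^ (2 * k)) + C * c ^ q := by
  have hp0 : 0 < p := by linarith
  have hl0 : 0 < l := by linarith
  have hj1' : (1 : ℝ) ≤ j := by exact_mod_cast hj1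
  have hj2' : (j : ℝ) ≤ 2 := by exact_mod_cast hj2
  have hjq : (j : ℝ) / q = j / p - j / l := by
    have : (j : ℝ) / q = j * (1 / q) := by ring
    rw [this, hq]; ring
  have hs : (p - j) / p + j / l + j / q = 1 := by
    rw [hjq, sub_div, div_self hp0.ne']; ring
  obtain ⟨C, hC0, hC⟩ := young3 (θ₁ := (p - j) / p) (θ₂ := j / l) (θ₃ := j / q)
    (div_nonneg (by linarith) hp0.le) (by positivity) (by positivity) hs hε hK
  refine ⟨C, hC0, ?_⟩
  intro a b c ξ ha hb hc hξ hξ1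
  refine le_trans ?_ (hC (a ^ p * ξ ^ (2 * k)) (b ^ l * ξ ^ (2 * k)) (c ^ q)
    (by positivity) (by positivity) (by positivity))
  refine mul_le_mul_of_nonneg_left ?_ hK
  have hζ : 0 ≤ ξ ^ (2 * k) := by positivity
  rw [Real.mul_rpow (by positivity) hζ, Real.mul_rpow (by positivity) hζ,
    ← Real.rpow_mul ha, ← Real.rpow_mul hb, ← Real.rpow_mul hc]
  rw [mul_div_cancel₀ _ hp0.ne', mul_div_cancel₀ _ hl0.ne', mul_div_cancel₀ _ hq0.ne',
    Real.rpow_natCast, Real.rpow_natCast]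
  have hξp : ξ ^ (2 * k - j) ≤ (ξ ^ (2 * k)) ^ ((p - j) / p) * (ξ ^ (2 * k)) ^ ((j : ℝ) / l) := by
    have hn1 : 0 ≤ (p - j) / p := div_nonneg (by linarith) hp0.le
    have hn2 : 0 ≤ (j : ℝ) / l := by positivity
    rw [← Real.rpow_add_of_nonneg hζ hn1 hn2]
    rw [← Real.rpow_natCast ξ (2 * k), ← Real.rpow_natCast ξ (2 * k - j), ← Real.rpow_mul hξ]
    rcases hξ.eq_or_lt with h0 | hpos
    · have hj2k : j ≤ 2 * k := by omega
      rw [← h0]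
      by_cases h2 : 2 * k - j = 0
      · exfalso
        have : (2 : ℝ) < q := by
          have : 1 / q < 1 / p := by rw [hq]; have : 0 < 1 / l := by positivity
                                     linarith
          have := (one_div_lt_one_div hq0 hp0).1 this
          linarith
        have h3 : (2 : ℝ) * k ≤ 2 := by
          have : 2 * k ≤ 2 := by omega
          exact_mod_cast this
        linarith
      · rw [Real.zero_rpow (by exact_mod_cast h2)]
        positivity
    · refine Real.rpow_le_rpow_of_exponent_ge hpos hξ1 ?_
      have hj2k : j ≤ 2 * k := by omega
      rw [Nat.cast_sub hj2k]
      have e : (p - j) / p + j / l = 1 - j / q := by linarith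
      rw [e, mul_sub, mul_one]
      push_cast
      have : (j : ℝ) ≤ 2 * k * (j / q) := by
        rw [mul_div_assoc', le_div_iff₀ hq0]
        nlinarith
      linarith
  calc a ^ (p - j) * b ^ j * c ^ j * ξ ^ (2 * k - j)
      ≤ a ^ (p - j) * b ^ j * c ^ j *
        ((ξ ^ (2 * k)) ^ ((p - j) / p) * (ξ ^ (2 * k)) ^ ((j : ℝ) / l)) :=
        mul_le_mul_of_nonneg_left hξp (by positivity)
    _ = _ := by ring

lemma rpow_mul_sq {a p : ℝ} (ha : 0 ≤ a) (hp : 2 < p) : a ^ (p - 2) * a ^ 2 = a ^ p := by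
  rw [← Real.rpow_natCast a 2, ← Real.rpow_add_of_nonneg ha (by linarith) (by norm_num)]
  norm_num

lemma rpow_mul_self' {a p : ℝ} (ha : 0 ≤ a) (hp : 2 < p) : a ^ (p - 2) * a = a ^ (p - 1) := by
  nth_rewrite 2 [← Real.rpow_one a]
  rw [← Real.rpow_add_of_nonneg ha (by linarith) (by norm_num)]
  congr 1; ring

lemma rpow_four {a p : ℝ} (ha : 0 ≤ a) (hp : 2 < p) : a ^ (p - 4) * a ^ 2 ≤ a ^ (p - 2) := by
  rcases ha.eq_or_lt with h | h
  · rw [← h]; simp; positivity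
  · rw [← Real.rpow_natCast a 2, ← Real.rpow_add h]
    apply le_of_eq; congr 1; push_cast; ring

lemma abs_pow_lam {t lam : ℝ} (h : 1 < lam) : |t| ^ (lam - 1) * t ^ 2 = |t| ^ (lam + 1) := by
  rw [← sq_abs, ← Real.rpow_natCast |t| 2, ← Real.rpow_add_of_nonneg (abs_nonneg t) (by linarith)
    (by norm_num)]
  congr 1; push_cast; ring

/-- Continuity of the flux. -/
lemma continuous_flux {u : EE N → ℝ} (hu : ContDiff ℝ 1 u) {p : ℝ} (hp : 2 < p) :
    Continuous (fun x => ‖gradient u x‖ ^ (p - 2) • gradient u x) :=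
  ((continuous_grad hu).norm.rpow_const (fun _ => Or.inr (by linarith))).smul (continuous_grad hu)

lemma continuous_rhs {u : EE N → ℝ} (hu : ContDiff ℝ 1 u) {lam : ℝ} (hl : 1 < lam) :
    Continuous (fun x => |u x| ^ (lam - 1) * u x) :=
  (hu.continuous.abs.rpow_const (fun _ => Or.inr (by linarith))).mul hu.continuous

lemma energy_estimate {p lam q : ℝ} (hp : 2 < p) (hlam : p - 1 < lam)
    {u : EE N → ℝ} (hu : ContDiff ℝ 1 u)
    (hw : ∀ φ : EE N → ℝ, ContDiff ℝ 1 φ → HasCompactSupport φ →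
      ∫ x, ⟪‖gradient u x‖ ^ (p - 2) • gradient u x, gradient φ x⟫ =
        ∫ x, |u x| ^ (lam - 1) * u x * φ x)
    {K : Set (EE N)}
    (hstable : ∀ φ : EE N → ℝ,
      ContDiff ℝ 1 φ → HasCompactSupport φ → tsupport φ ⊆ Kᶜ →
      0 ≤ ∫ x,
        (‖gradient u x‖ ^ (p - 2) * ‖gradient φ x‖ ^ 2 +
          ((p - 2) * ‖gradient u x‖ ^ (p - 4) * ⟪gradient u x, gradient φ x⟫ ^ 2 -
            lam * |u x| ^ (lam - 1) * φ x ^ 2)))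
    (hq0 : 0 < q) (hq : 1 / q = 1 / p - 1 / (lam + 1))
    {k : ℕ} (hk : q ≤ 2 * k) (hk1 : 1 ≤ k) :
    ∃ C : ℝ, 0 ≤ C ∧ ∀ ξ : EE N → ℝ, ContDiff ℝ 1 ξ → HasCompactSupport ξ → tsupport ξ ⊆ Kᶜ →
      (∀ x, 0 ≤ ξ x) → (∀ x, ξ x ≤ 1) →
      ∫ x, (‖gradient u x‖ ^ p + |u x| ^ (lam + 1)) * ξ x ^ (2 * k) ≤
        C * ∫ x, ‖gradient ξ x‖ ^ q := by
  have hd : 0 < lam - (p - 1) := by linarith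
  obtain ⟨C1, hC1, H1⟩ := pw_young (l := lam + 1) hp (by linarith) hq0 hq (j := 1) le_rfl (by norm_num)
    hk hk1 (ε := 1 / 4) (Kc := 2 * k) (by norm_num) (by positivity)
  obtain ⟨C2, hC2, H2⟩ := pw_young (l := lam + 1) hp (by linarith) hq0 hq (j := 2) (by norm_num) le_rfl
    hk hk1 (ε := 1 / 4) (Kc := 2 * ((p - 1) / (lam - (p - 1)) * k ^ 2)) (by norm_num)
    (by have : 0 < p - 1 := by linarith
        positivity)
  refine ⟨2 * (C1 + C2), by positivity, ?_⟩
  intro ξ hξ hξc hξK hξ0 hξ1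
  have hud : Differentiable ℝ u := hu.differentiable one_ne_zero
  have hξd : Differentiable ℝ ξ := hξ.differentiable one_ne_zero
  have cu := hu.continuous
  have cξ := hξ.continuous
  have cgu := continuous_grad hu
  have cgξ := continuous_grad hξ
  have cA : Continuous (fun x => ‖gradient u x‖ ^ (p - 2)) :=
    cgu.norm.rpow_const (fun _ => Or.inr (by linarith))
  have cAp : Continuous (fun x => ‖gradient u x‖ ^ p) :=
    cgu.norm.rpow_const (fun _ => Or.inr (by linarith))
  have cul : Continuous (fun x => |u x| ^ (lam + 1)) :=
    cu.abs.rpow_const (fun _ => Or.inr (by linarith))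
  have hk2 : 2 * k ≠ 0 := by omega
  -- compactly supported helper
  have ccs : ∀ g : EE N → ℝ, Continuous g → (∀ x, x ∉ tsupport ξ → g x = 0) → Integrable g :=
    fun g hg h0 => hg.integrable_of_hasCompactSupport (HasCompactSupport.intro hξc h0)
  have z0 : ∀ x, x ∉ tsupport ξ → ξ x = 0 := fun x hx => image_eq_zero_of_notMem_tsupport hx
  have zg : ∀ x, x ∉ tsupport ξ → gradient ξ x = 0 := fun x hx => grad_zero_of_notMem hx
  set X : EE N → ℝ := fun x => ‖gradient u x‖ ^ p * ξ x ^ (2 * k) with hX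
  set Y : EE N → ℝ := fun x => |u x| ^ (lam + 1) * ξ x ^ (2 * k) with hY
  set Z : EE N → ℝ := fun x => ‖gradient ξ x‖ ^ q with hZ
  set S : EE N → ℝ := fun x => 2 * k * (u x * ξ x ^ (2 * k - 1) *
    (‖gradient u x‖ ^ (p - 2) * ⟪gradient u x, gradient ξ x⟫)) with hS
  set T : EE N → ℝ := fun x => k ^ 2 * (‖gradient u x‖ ^ (p - 2) * |u x| ^ 2 *
    ‖gradient ξ x‖ ^ 2 * ξ x ^ (2 * k - 2)) with hT
  have iX : Integrable X := ccs X (cAp.mul (cξ.pow _)) (fun x hx => by simp [hX, z0 x hx, hk2])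
  have iY : Integrable Y := ccs Y (cul.mul (cξ.pow _)) (fun x hx => by simp [hY, z0 x hx, hk2])
  have iZ : Integrable Z := ccs Z (cgξ.norm.rpow_const (fun _ => Or.inr hq0.le))
    (fun x hx => by simp [hZ, zg x hx, hq0.ne'])
  have iS : Integrable S := ccs S
    (continuous_const.mul ((cu.mul (cξ.pow _)).mul (cA.mul (cgu.inner cgξ))))
    (fun x hx => by simp only [hS, zg x hx, inner_zero_right, mul_zero])
  have iT : Integrable T := ccs T
    (continuous_const.mul (((cA.mul (cu.abs.pow _)).mul (cgξ.norm.pow _)).mul (cξ.pow _)))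
    (fun x hx => by simp [hT, zg x hx])
  -- the test functions
  have cφ1 : ContDiff ℝ 1 (fun x => u x * ξ x ^ k) := hu.mul (hξ.pow k)
  have cφ2 : ContDiff ℝ 1 (fun x => u x * ξ x ^ (2 * k)) := hu.mul (hξ.pow _)
  have sφ1 : HasCompactSupport (fun x => u x * ξ x ^ k) :=
    HasCompactSupport.intro hξc (fun x hx => by
      have : k ≠ 0 := by omega
      simp [z0 x hx, this])
  have sφ2 : HasCompactSupport (fun x => u x * ξ x ^ (2 * k)) :=
    HasCompactSupport.intro hξc (fun x hx => by simp [z0 x hx, hk2])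
  have tφ1 : tsupport (fun x => u x * ξ x ^ k) ⊆ Kᶜ := by
    refine Subset.trans (closure_mono ?_) hξK
    intro x hx hx0
    have : k ≠ 0 := by omega
    exact hx (by simp [hx0, this])
  have g1 : ∀ x, gradient (fun x => u x * ξ x ^ k) x =
      (u x * (k * ξ x ^ (k - 1))) • gradient ξ x + ξ x ^ k • gradient u x := by
    intro x
    rw [grad_mul (f := u) (g := fun x => ξ x ^ k) (hud x) ((hξd x).pow k), grad_pow (hξd x), smul_smul]
  have g2 : ∀ x, gradient (fun x => u x * ξ x ^ (2 * k)) x =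
      (u x * (2 * k * ξ x ^ (2 * k - 1))) • gradient ξ x + ξ x ^ (2 * k) • gradient u x := by
    intro x
    rw [grad_mul (f := u) (g := fun x => ξ x ^ (2 * k)) (hud x) ((hξd x).pow _), grad_pow (hξd x),
      smul_smul]
    push_cast; rfl
  -- weak equation
  have W := hw _ cφ2 sφ2
  have W1 : ∀ x, ⟪‖gradient u x‖ ^ (p - 2) • gradient u x,
      gradient (fun x => u x * ξ x ^ (2 * k)) x⟫ = X x + S x := by
    intro x
    rw [g2, inner_smul_left, inner_add_right, inner_smul_right, inner_smul_right,
      real_inner_self_eq_norm_sq]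
    simp only [hX, hS, ← rpow_mul_sq (norm_nonneg (gradient u x)) hp, RCLike.conj_to_real]
    ring
  have W2 : ∀ x, |u x| ^ (lam - 1) * u x * (u x * ξ x ^ (2 * k)) = Y x := by
    intro x
    simp only [hY, ← abs_pow_lam (t := u x) (show 1 < lam by linarith)]
    ring
  simp_rw [W1, W2] at W
  rw [integral_add iX iS] at W
  -- stability
  have St := hstable _ cφ1 sφ1 tφ1
  have N1 : ∀ x, ‖gradient u x‖ ^ (p - 2) * ‖gradient (fun x => u x * ξ x ^ k) x‖ ^ 2 =
      X x + S x + T x := by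
    intro x
    rw [g1, norm_add_sq_real, norm_smul, norm_smul, inner_smul_left, inner_smul_right,
      real_inner_comm]
    simp only [hX, hS, hT, ← rpow_mul_sq (norm_nonneg (gradient u x)) hp, RCLike.conj_to_real]
    obtain ⟨m, rfl⟩ : ∃ m, k = m + 1 := ⟨k - 1, by omega⟩
    have e1 : 2 * (m + 1) - 1 = 2 * m + 1 := by omega
    have e2 : 2 * (m + 1) - 2 = 2 * m := by omega
    rw [e1, e2, mul_pow, mul_pow, Real.norm_eq_abs, Real.norm_eq_abs, sq_abs, sq_abs, sq_abs]
    simp only [Nat.add_sub_cancel]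
    ring
  have Q : ∫ x, (‖gradient u x‖ ^ (p - 2) * ‖gradient (fun x => u x * ξ x ^ k) x‖ ^ 2 +
          ((p - 2) * ‖gradient u x‖ ^ (p - 4) *
            ⟪gradient u x, gradient (fun x => u x * ξ x ^ k) x⟫ ^ 2 -
            lam * |u x| ^ (lam - 1) * (u x * ξ x ^ k) ^ 2)) ≤
      ∫ x, ((p - 1) * (X x + S x + T x) - lam * Y x) := by
    have cg := continuous_grad cφ1
    have L : ∀ x, ‖gradient u x‖ ^ (p - 4) *
        ⟪gradient u x, gradient (fun x => u x * ξ x ^ k) x⟫ ^ 2 ≤ X x + S x + T x := by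
      intro x
      rw [← N1]
      have h1 : ⟪gradient u x, gradient (fun x => u x * ξ x ^ k) x⟫ ^ 2 ≤
          ‖gradient u x‖ ^ 2 * ‖gradient (fun x => u x * ξ x ^ k) x‖ ^ 2 := by
        rw [← mul_pow, ← sq_abs]
        exact pow_le_pow_left₀ (abs_nonneg _) (abs_real_inner_le_norm _ _) 2
      calc _ ≤ ‖gradient u x‖ ^ (p - 4) *
            (‖gradient u x‖ ^ 2 * ‖gradient (fun x => u x * ξ x ^ k) x‖ ^ 2) :=
            mul_le_mul_of_nonneg_left h1 (by positivity)
        _ = (‖gradient u x‖ ^ (p - 4) * ‖gradient u x‖ ^ 2) *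
            ‖gradient (fun x => u x * ξ x ^ k) x‖ ^ 2 := by ring
        _ ≤ _ := mul_le_mul_of_nonneg_right (rpow_four (norm_nonneg _) hp) (by positivity)
    have Yeq : ∀ x, lam * |u x| ^ (lam - 1) * (u x * ξ x ^ k) ^ 2 = lam * Y x := by
      intro x
      rw [← W2, pow_mul']
      ring
    have iL : Integrable (fun x => ‖gradient u x‖ ^ (p - 4) *
        ⟪gradient u x, gradient (fun x => u x * ξ x ^ k) x⟫ ^ 2) := by
      refine Integrable.mono' ((iX.add iS).add iT) ?_ (Eventually.of_forall fun x => ?_)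
      · exact ((cgu.norm.measurable.pow_const _).mul
          ((cgu.inner cg).pow 2).measurable).aestronglyMeasurable
      · rw [Real.norm_of_nonneg (by positivity)]
        exact L x
    refine integral_mono ?_ ?_ ?_
    · simp_rw [N1, Yeq, mul_assoc]
      exact ((iX.add iS).add iT).add ((iL.const_mul _).sub (iY.const_mul _))
    · exact (((iX.add iS).add iT).const_mul _).sub (iY.const_mul _)
    · intro x
      simp only [N1, Yeq, mul_assoc]
      have := mul_le_mul_of_nonneg_left (L x) (show 0 ≤ p - 2 by linarith)
      linarith
  have Q2 : ∫ x, ((p - 1) * (X x + S x + T x) - lam * Y x) =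
      (p - 1) * ((∫ x, X x) + (∫ x, S x) + (∫ x, T x)) - lam * ∫ x, Y x := by
    have i1 : Integrable (fun x => X x + S x) := iX.add iS
    have i2 : Integrable (fun x => X x + S x + T x) := i1.add iT
    rw [integral_sub (i2.const_mul _) (iY.const_mul _), integral_const_mul,
      integral_const_mul, integral_add i1 iT, integral_add iX iS]
  have F1 : (lam - (p - 1)) * ∫ x, Y x ≤ (p - 1) * ∫ x, T x := by
    have := St.trans Q
    rw [Q2, W] at this
    linarith
  have F2 : ∫ x, Y x ≤ (p - 1) / (lam - (p - 1)) * ∫ x, T x := by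
    rw [div_mul_eq_mul_div, le_div_iff₀ hd]
    linarith
  have F3 : ∫ x, (2 * ((p - 1) / (lam - (p - 1))) * T x - S x) ≤
      ∫ x, (1 / 2 * (X x + Y x) + (C1 + C2) * Z x) := by
    refine integral_mono ((iT.const_mul _).sub iS)
      (((iX.add iY).const_mul _).add (iZ.const_mul _)) ?_
    intro x
    have a1 := H1 ‖gradient u x‖ |u x| ‖gradient ξ x‖ (ξ x) (norm_nonneg _) (abs_nonneg _)
      (norm_nonneg _) (hξ0 x) (hξ1 x)
    have a2 := H2 ‖gradient u x‖ |u x| ‖gradient ξ x‖ (ξ x) (norm_nonneg _) (abs_nonneg _)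
      (norm_nonneg _) (hξ0 x) (hξ1 x)
    have a3 : -S x ≤ 2 * k * (‖gradient u x‖ ^ (p - (1 : ℕ)) * |u x| ^ 1 * ‖gradient ξ x‖ ^ 1 *
        ξ x ^ (2 * k - 1)) := by
      refine (neg_le_abs _).trans ?_
      have hξp : 0 ≤ ξ x ^ (2 * k - 1) := pow_nonneg (hξ0 x) _
      have hAp : 0 ≤ ‖gradient u x‖ ^ (p - 2) := by positivity
      simp only [hS, abs_mul, abs_of_nonneg hξp, abs_of_nonneg hAp, Nat.abs_cast, abs_two,
        Nat.cast_one, ← rpow_mul_self' (norm_nonneg (gradient u x)) hp, pow_one]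
      have := abs_real_inner_le_norm (gradient u x) (gradient ξ x)
      calc _ ≤ 2 * k * (|u x| * ξ x ^ (2 * k - 1) * (‖gradient u x‖ ^ (p - 2) *
            (‖gradient u x‖ * ‖gradient ξ x‖))) := by gcongr
        _ = _ := by ring
    have a4 : 2 * ((p - 1) / (lam - (p - 1))) * T x = 2 * ((p - 1) / (lam - (p - 1)) * k ^ 2) *
        (‖gradient u x‖ ^ (p - (2 : ℕ)) * |u x| ^ 2 * ‖gradient ξ x‖ ^ 2 * ξ x ^ (2 * k - 2)) := by
      simp only [hT, Nat.cast_ofNat]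
      ring
    have h5 := add_le_add (a4.le.trans a2) (a3.trans a1)
    calc _ = 2 * ((p - 1) / (lam - (p - 1))) * T x + -S x := by ring
      _ ≤ _ := h5
      _ = _ := by simp only [hX, hY, hZ]; ring
  have i3 : Integrable (fun x => X x + Y x) := iX.add iY
  have E1 : ∫ x, (2 * ((p - 1) / (lam - (p - 1))) * T x - S x) =
      2 * ((p - 1) / (lam - (p - 1))) * (∫ x, T x) - ∫ x, S x := by
    rw [integral_sub (iT.const_mul _) iS]
    congr 1
    exact integral_const_mul _ _
  have E2 : ∫ x, (1 / 2 * (X x + Y x) + (C1 + C2) * Z x) =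
      1 / 2 * ((∫ x, X x) + ∫ x, Y x) + (C1 + C2) * ∫ x, Z x := by
    rw [integral_add (i3.const_mul _) (iZ.const_mul _), ← integral_add iX iY]
    congr 1
    · exact integral_const_mul _ _
    · exact integral_const_mul _ _
  rw [E1, E2] at F3
  have F4 : ∫ x, (‖gradient u x‖ ^ p + |u x| ^ (lam + 1)) * ξ x ^ (2 * k) =
      (∫ x, X x) + ∫ x, Y x := by
    rw [← integral_add iX iY]
    simp only [hX, hY, add_mul]
  rw [F4]
  nlinarith

/-- The basic bump function. -/
noncomputable def chi (N : ℕ) : EE N → ℝ :=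
  (⟨1, 2, by norm_num, by norm_num⟩ : ContDiffBump (0 : EE N))

/-- The rescaled cut-off. -/
noncomputable def cut (N : ℕ) (R : ℝ) : EE N → ℝ := fun x => chi N (R⁻¹ • x)

lemma chi_contDiff : ContDiff ℝ 1 (chi N) := ContDiffBump.contDiff _

lemma chi_compact : HasCompactSupport (chi N) := ContDiffBump.hasCompactSupport _

lemma cut_contDiff (R : ℝ) : ContDiff ℝ 1 (cut N R) :=
  chi_contDiff.comp (contDiff_const_smul _)

lemma cut_nonneg (R : ℝ) (x : EE N) : 0 ≤ cut N R x := ContDiffBump.nonneg _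

lemma cut_le_one (R : ℝ) (x : EE N) : cut N R x ≤ 1 := ContDiffBump.le_one _

lemma cut_eq_one {R : ℝ} (hR : 0 < R) {x : EE N} (hx : ‖x‖ ≤ R) : cut N R x = 1 := by
  apply ContDiffBump.one_of_mem_closedBall
  rw [mem_closedBall_zero_iff, norm_smul, Real.norm_of_nonneg (by positivity)]
  change R⁻¹ * ‖x‖ ≤ 1
  rw [inv_mul_le_iff₀ hR]; linarith

lemma cut_eq_zero {R : ℝ} (hR : 0 < R) {x : EE N} (hx : 2 * R ≤ ‖x‖) : cut N R x = 0 := by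
  apply ContDiffBump.zero_of_le_dist
  rw [dist_zero_right, norm_smul, Real.norm_of_nonneg (by positivity)]
  change 2 ≤ R⁻¹ * ‖x‖
  rw [le_inv_mul_iff₀ hR]; linarith

lemma cut_tsupport {R : ℝ} (hR : 0 < R) : tsupport (cut N R) ⊆ closedBall 0 (2 * R) := by
  refine closure_minimal ?_ isClosed_closedBall
  intro x hx
  rw [mem_closedBall_zero_iff]
  by_contra h
  exact hx (cut_eq_zero hR (not_le.1 h).le)

lemma cut_compact {R : ℝ} (hR : 0 < R) : HasCompactSupport (cut N R) :=
  (isCompact_closedBall (0 : EE N) (2 * R)).of_isClosed_subset (isClosed_tsupport _)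
    (cut_tsupport hR)

lemma grad_cut (R : ℝ) (x : EE N) :
    gradient (cut N R) x = R⁻¹ • gradient (chi N) (R⁻¹ • x) :=
  grad_comp_smul (chi_contDiff.differentiable one_ne_zero) _ _

lemma grad_cut_out {R : ℝ} (hR : 0 < R) {x : EE N} (hx : 2 * R < ‖x‖) :
    gradient (cut N R) x = 0 := by
  apply grad_zero_of_notMem
  intro h
  have := mem_closedBall_zero_iff.1 (cut_tsupport hR h)
  linarith

lemma grad_cut_in {R : ℝ} (hR : 0 < R) {x : EE N} (hx : ‖x‖ < R) :
    gradient (cut N R) x = 0 := by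
  have : cut N R =ᶠ[𝓝 x] fun _ => (1 : ℝ) := by
    have : ball (0 : EE N) R ∈ 𝓝 x := isOpen_ball.mem_nhds (mem_ball_zero_iff.2 hx)
    filter_upwards [this] with y hy
    exact cut_eq_one hR (mem_ball_zero_iff.1 hy).le
  rw [this.gradient_eq, gradient_fun_const]

lemma grad_cut_bound (N : ℕ) : ∃ M : ℝ, 0 ≤ M ∧ ∀ R : ℝ, 0 < R → ∀ x : EE N,
    ‖x‖ * ‖gradient (cut N R) x‖ ≤ M := by
  have hc : HasCompactSupport (fderiv ℝ (chi N)) := chi_compact.fderiv ℝ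
  obtain ⟨M, hM⟩ := hc.exists_bound_of_continuous (chi_contDiff.continuous_fderiv one_ne_zero)
  have hM0 : 0 ≤ M := (norm_nonneg _).trans (hM 0)
  refine ⟨2 * M, by positivity, ?_⟩
  intro R hR x
  by_cases hx : 2 * R < ‖x‖
  · rw [grad_cut_out hR hx]; simp [hM0]
  · have h1 := hM (R⁻¹ • x)
    rw [grad_cut, norm_smul, norm_grad, Real.norm_of_nonneg (by positivity)]
    calc _ ≤ (2 * R) * (R⁻¹ * M) := by gcongr; exact not_lt.1 hx
      _ = 2 * M := by field_simp

lemma integral_grad_cut {q R : ℝ} (hR : 0 < R) :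
    ∫ x, ‖gradient (cut N R) x‖ ^ q = R ^ ((N : ℝ) - q) * ∫ x, ‖gradient (chi N) x‖ ^ q := by
  have h1 : ∀ x, ‖gradient (cut N R) x‖ ^ q = (R⁻¹) ^ q * ‖gradient (chi N) (R⁻¹ • x)‖ ^ q := by
    intro x
    rw [grad_cut, norm_smul, Real.norm_of_nonneg (by positivity),
      Real.mul_rpow (by positivity) (norm_nonneg _)]
  simp_rw [h1]
  rw [integral_const_mul, Measure.integral_comp_smul volume (fun y => ‖gradient (chi N) y‖ ^ q) R⁻¹,
    smul_eq_mul, ← mul_assoc]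
  congr 1
  have : Module.finrank ℝ (EE N) = N := by simp
  rw [this, inv_pow, inv_inv, abs_of_nonneg (by positivity), Real.inv_rpow hR.le,
    Real.rpow_sub hR, Real.rpow_natCast]
  field_simp

lemma energy_integrable {W : EE N → ℝ} (hW : Continuous W) (hW0 : ∀ x, 0 ≤ W x)
    {K : Set (EE N)} (hK : IsCompact K) {q C : ℝ} (hq0 : 0 < q) (hNq : (N : ℝ) < q) {k : ℕ}
    (hC : 0 ≤ C)
    (h : ∀ ξ : EE N → ℝ, ContDiff ℝ 1 ξ → HasCompactSupport ξ → tsupport ξ ⊆ Kᶜ →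
      (∀ x, 0 ≤ ξ x) → (∀ x, ξ x ≤ 1) →
      ∫ x, W x * ξ x ^ (2 * k) ≤ C * ∫ x, ‖gradient ξ x‖ ^ q) (hk : 1 ≤ k) :
    Integrable W := by
  obtain ⟨r, hr⟩ := hK.isBounded.subset_closedBall (0 : EE N)
  set R0 := max r 0 + 1 with hR0
  have hR0p : 0 < R0 := by positivity
  have hKR : K ⊆ ball 0 R0 := by
    intro x hx
    have := mem_closedBall_zero_iff.1 (hr hx)
    rw [mem_ball_zero_iff]
    have := le_max_left r 0
    linarith
  set I := ∫ x, ‖gradient (chi N) x‖ ^ q with hI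
  have hI0 : 0 ≤ I := integral_nonneg fun x => by positivity
  have iG : ∀ R, 0 < R → Integrable (fun x => ‖gradient (cut N R) x‖ ^ q) := by
    intro R hR
    refine Continuous.integrable_of_hasCompactSupport
      ((continuous_grad (cut_contDiff R)).norm.rpow_const (fun _ => Or.inr hq0.le)) ?_
    refine HasCompactSupport.intro (cut_compact hR (N := N)) (fun x hx => ?_)
    simp [grad_zero_of_notMem hx, hq0.ne']
  have key : ∀ R, 3 * R0 ≤ R → ∫ x, W x * (cut N R x - cut N R0 x) ^ (2 * k) ≤
      C * (2 * (R0 ^ ((N : ℝ) - q) * I)) := by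
    intro R hR
    have hRp : 0 < R := by linarith
    have hcs : HasCompactSupport (fun x => cut N R x - cut N R0 x) :=
      (cut_compact hRp).sub (cut_compact hR0p)
    refine (h (fun x => cut N R x - cut N R0 x) ((cut_contDiff R).sub (cut_contDiff R0))
      hcs ?_ ?_ ?_).trans ?_
    · have : tsupport (fun x => cut N R x - cut N R0 x) ⊆ (ball 0 R0)ᶜ := by
        refine closure_minimal ?_ isOpen_ball.isClosed_compl
        intro x hx hx'
        have hx'' := (mem_ball_zero_iff.1 hx').le
        apply hx
        simp only
        rw [cut_eq_one hR0p hx'', cut_eq_one hRp (by linarith), sub_self]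
      exact this.trans (compl_subset_compl.2 hKR)
    · intro x
      by_cases hx : ‖x‖ ≤ R
      · rw [cut_eq_one hRp hx]; linarith [cut_le_one R0 x]
      · rw [cut_eq_zero hR0p (by linarith), sub_zero]; exact cut_nonneg _ _
    · intro x
      linarith [cut_le_one R x, cut_nonneg R0 x]
    · refine mul_le_mul_of_nonneg_left ?_ hC
      have hle : ∫ x, ‖gradient (fun x => cut N R x - cut N R0 x) x‖ ^ q ≤
          ∫ x, (‖gradient (cut N R) x‖ ^ q + ‖gradient (cut N R0) x‖ ^ q) := by
        refine integral_mono_of_nonneg (Eventually.of_forall fun x => by positivity)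
          ((iG R hRp).add (iG R0 hR0p)) (Eventually.of_forall fun x => ?_)
        simp only
        rw [grad_sub ((cut_contDiff R).differentiable one_ne_zero x)
          ((cut_contDiff R0).differentiable one_ne_zero x)]
        by_cases hx : ‖x‖ < R
        · rw [grad_cut_in hRp hx]; simp [hq0.ne']
        · rw [grad_cut_out hR0p (x := x) (by linarith)]; simp [hq0.ne']
      refine hle.trans ?_
      rw [integral_add (iG R hRp) (iG R0 hR0p), integral_grad_cut hRp, integral_grad_cut hR0p]
      have : R ^ ((N : ℝ) - q) ≤ R0 ^ ((N : ℝ) - q) :=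
        Real.rpow_le_rpow_of_nonpos hR0p (by linarith) (by linarith)
      have := mul_le_mul_of_nonneg_right this hI0
      linarith
  have hcov : AECover (volume : Measure (EE N)) atTop (fun n : ℕ => closedBall (0 : EE N) n) :=
    aecover_closedBall tendsto_natCast_atTop_atTop
  have hloc : ∀ R, IntegrableOn W (closedBall (0 : EE N) R) := fun R =>
    hW.continuousOn.integrableOn_compact (isCompact_closedBall _ _)
  refine hcov.integrable_of_integral_bounded_of_nonneg_ae
    (C * (2 * (R0 ^ ((N : ℝ) - q) * I)) + ∫ x in closedBall 0 (2 * R0), W x) (fun n => hloc n)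
    (Eventually.of_forall hW0) (Eventually.of_forall fun n => ?_)
  set R := max (n : ℝ) (3 * R0) with hR
  have hR3 : 3 * R0 ≤ R := le_max_right _ _
  have hRn : (n : ℝ) ≤ R := le_max_left _ _
  have hRp : 0 < R := by linarith
  refine le_trans ?_ (add_le_add_left (key R hR3) _)
  have iA : Integrable (fun x => W x * (cut N R x - cut N R0 x) ^ (2 * k)) := by
    refine Continuous.integrable_of_hasCompactSupport
      (hW.mul (((cut_contDiff R).continuous.sub (cut_contDiff R0).continuous).pow _)) ?_
    refine HasCompactSupport.intro ((cut_compact hRp).sub (cut_compact hR0p) :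
      HasCompactSupport (cut N R - cut N R0)) (fun x hx => ?_)
    have : (cut N R - cut N R0) x = 0 := image_eq_zero_of_notMem_tsupport hx
    rw [Pi.sub_apply] at this
    rw [this, zero_pow (by omega), mul_zero]
  rw [← integral_indicator measurableSet_closedBall, ← integral_indicator measurableSet_closedBall,
    ← integral_add iA ((hloc _).integrable_indicator measurableSet_closedBall)]
  refine integral_mono ((hloc _).integrable_indicator measurableSet_closedBall)
    (iA.add ((hloc _).integrable_indicator measurableSet_closedBall)) (fun x => ?_)
  have hpos : 0 ≤ W x * (cut N R x - cut N R0 x) ^ (2 * k) :=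
    mul_nonneg (hW0 x) (Even.pow_nonneg (even_two_mul k) _)
  simp only
  by_cases h1 : x ∈ closedBall (0 : EE N) n
  · by_cases h2 : x ∈ closedBall (0 : EE N) (2 * R0)
    · rw [indicator_of_mem h1, indicator_of_mem h2]; linarith
    · rw [indicator_of_mem h1, indicator_of_notMem h2]
      rw [mem_closedBall_zero_iff] at h1 h2
      rw [cut_eq_one hRp (h1.trans hRn), cut_eq_zero hR0p (not_le.1 h2).le]
      simp
  · rw [indicator_of_notMem h1]
    exact add_nonneg hpos (indicator_nonneg (fun y _ => hW0 y) x)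

lemma param_deriv {w g : EE N → ℝ} (hw : ContDiff ℝ 1 w) (hg : Continuous g) (ρ : ℝ)
    (h0 : ∀ x, ρ < ‖x‖ → ∀ t : ℝ, 1 / 2 ≤ t → t ≤ 3 / 2 →
      g x = 0 ∨ (w (t • x) = 0 ∧ fderiv ℝ w (t • x) = 0)) :
    HasDerivAt (fun t : ℝ => ∫ x, g x * w (t • x)) (∫ x, g x * fderiv ℝ w x x) 1 := by
  have hK : IsCompact (Icc (1 / 2 : ℝ) (3 / 2) ×ˢ closedBall (0 : EE N) ρ) :=
    isCompact_Icc.prod (isCompact_closedBall _ _)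
  have hcw : Continuous (fun y => fderiv ℝ w y) := hw.continuous_fderiv one_ne_zero
  have hwc := hw.continuous
  have hcont : Continuous (fun z : ℝ × EE N => g z.2 * fderiv ℝ w (z.1 • z.2) z.2) := by
    have : Continuous (fun z : ℝ × EE N => fderiv ℝ w (z.1 • z.2)) :=
      hcw.comp (continuous_fst.smul continuous_snd)
    exact (hg.comp continuous_snd).mul (this.clm_apply continuous_snd)
  obtain ⟨B, hB⟩ := hK.exists_bound_of_continuousOn hcont.continuousOn
  have hs : Ioo (1 / 2 : ℝ) (3 / 2) ∈ 𝓝 (1 : ℝ) := Ioo_mem_nhds (by norm_num) (by norm_num)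
  have hF : ∀ t : ℝ, Continuous (fun x => g x * w (t • x)) := fun t =>
    hg.mul (hwc.comp (continuous_const_smul t))
  have key := (hasDerivAt_integral_of_dominated_loc_of_deriv_le (μ := (volume : Measure (EE N)))
    (F := fun (t : ℝ) x => g x * w (t • x))
    (F' := fun (t : ℝ) x => g x * fderiv ℝ w (t • x) x) (x₀ := (1 : ℝ))
    (bound := (closedBall (0 : EE N) ρ).indicator (fun _ => B)) hs
    (Eventually.of_forall fun t => (hF t).aestronglyMeasurable) ?_ ?_ ?_ ?_ ?_).2
  · simpa using key
  · refine (hF 1).integrable_of_hasCompactSupport ?_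
    refine HasCompactSupport.intro (isCompact_closedBall (0 : EE N) ρ) (fun x hx => ?_)
    rw [mem_closedBall_zero_iff, not_le] at hx
    rcases h0 x hx 1 (by norm_num) (by norm_num) with h | h
    · rw [h, zero_mul]
    · rw [h.1, mul_zero]
  · exact (hcont.comp (by fun_prop : Continuous fun x : EE N => ((1 : ℝ), x))).aestronglyMeasurable
  · refine Eventually.of_forall fun x t ht => ?_
    by_cases hx : x ∈ closedBall (0 : EE N) ρ
    · rw [indicator_of_mem hx]
      exact hB (t, x) ⟨⟨ht.1.le, ht.2.le⟩, hx⟩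
    · rw [indicator_of_notMem hx]
      rw [mem_closedBall_zero_iff, not_le] at hx
      rcases h0 x hx t ht.1.le ht.2.le with h | h
      · simp [h]
      · simp [h.2]
  · refine (integrable_indicator_iff measurableSet_closedBall).2 ?_
    exact continuousOn_const.integrableOn_compact (isCompact_closedBall _ _)
  · refine Eventually.of_forall fun x t _ => ?_
    have h1 : HasDerivAt (fun t : ℝ => t • x) x t := by
      simpa using (hasDerivAt_id t).smul_const x
    have h2 := ((hw.differentiable one_ne_zero (t • x)).hasFDerivAt).comp_hasDerivAt t h1
    exact h2.const_mul (g x)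

/-- cut-off on the parametrised factor. -/
lemma param_deriv_left {η g : EE N → ℝ} (hη : ContDiff ℝ 1 η) (hc : HasCompactSupport η)
    (hg : Continuous g) :
    HasDerivAt (fun t : ℝ => ∫ x, g x * η (t • x)) (∫ x, g x * fderiv ℝ η x x) 1 := by
  obtain ⟨r, hr⟩ := hc.isBounded.subset_closedBall (0 : EE N)
  refine param_deriv hη hg (2 * max r 0) (fun x hx t ht _ => Or.inr ?_)
  have : t • x ∉ tsupport η := by
    intro h
    have := mem_closedBall_zero_iff.1 (hr h)
    rw [norm_smul, Real.norm_of_nonneg (by linarith)] at this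
    have h3 := le_max_left r 0
    nlinarith [norm_nonneg x]
  refine ⟨image_eq_zero_of_notMem_tsupport this, ?_⟩
  exact image_eq_zero_of_notMem_tsupport (fun h => this (tsupport_fderiv_subset ℝ h))

/-- cut-off on the fixed factor. -/
lemma param_deriv_right {w g : EE N → ℝ} (hw : ContDiff ℝ 1 w) (hc : HasCompactSupport g)
    (hg : Continuous g) :
    HasDerivAt (fun t : ℝ => ∫ x, g x * w (t • x)) (∫ x, g x * fderiv ℝ w x x) 1 := by
  obtain ⟨r, hr⟩ := hc.isBounded.subset_closedBall (0 : EE N)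
  refine param_deriv hw hg r (fun x hx t _ _ => Or.inl ?_)
  refine image_eq_zero_of_notMem_tsupport (fun h => ?_)
  have := mem_closedBall_zero_iff.1 (hr h)
  linarith

lemma scale_int (η h : EE N → ℝ) {s : ℝ} (hs : 0 < s) :
    ∫ x, η x * h (s • x) = (s ^ N)⁻¹ * ∫ x, h x * η (s⁻¹ • x) := by
  have := Measure.integral_comp_smul (volume : Measure (EE N)) (fun y => h y * η (s⁻¹ • y)) s
  have e : Module.finrank ℝ (EE N) = N := by simp
  rw [e, abs_of_nonneg (by positivity), smul_eq_mul] at this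
  rw [← this]
  congr 1
  ext x
  rw [smul_smul, inv_mul_cancel₀ hs.ne', one_smul, mul_comm]

lemma deriv_scaled {η g : EE N → ℝ} (hη : ContDiff ℝ 1 η) (hc : HasCompactSupport η)
    (hg : Continuous g) :
    HasDerivAt (fun s : ℝ => (s ^ N)⁻¹ * ∫ x, g x * η (s⁻¹ • x))
      (-(N : ℝ) * (∫ x, g x * η x) - ∫ x, g x * fderiv ℝ η x x) 1 := by
  have h1 := param_deriv_left hη hc hg
  have h2 : HasDerivAt (fun s : ℝ => s⁻¹) (-1) 1 := by
    simpa using hasDerivAt_inv (one_ne_zero : (1 : ℝ) ≠ 0)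
  have h3 : HasDerivAt (fun s : ℝ => ∫ x, g x * η (s⁻¹ • x))
      ((∫ x, g x * fderiv ℝ η x x) * (-1)) 1 := by
    have h1' : HasDerivAt (fun t : ℝ => ∫ x, g x * η (t • x)) (∫ x, g x * fderiv ℝ η x x)
      ((fun s : ℝ => s⁻¹) 1) := by simpa using h1
    exact h1'.comp (1 : ℝ) h2
  have h4 : HasDerivAt (fun s : ℝ => (s ^ N)⁻¹) (-(N : ℝ)) 1 := by
    simpa using (hasDerivAt_pow N (1 : ℝ)).fun_inv (by simp)
  refine (h4.fun_mul h3).congr_deriv ?_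
  simp only [inv_one, one_smul, one_pow]
  ring

lemma div_identity {η w : EE N → ℝ} (hη : ContDiff ℝ 1 η) (hc : HasCompactSupport η)
    (hw : ContDiff ℝ 1 w) :
    ∫ x, η x * fderiv ℝ w x x = -(N : ℝ) * (∫ x, w x * η x) - ∫ x, w x * fderiv ℝ η x x := by
  have h1 := param_deriv_right hw hc hη.continuous
  have h2 := deriv_scaled hη hc hw.continuous
  refine h1.unique (h2.congr_of_eventuallyEq ?_)
  filter_upwards [lt_mem_nhds (zero_lt_one : (0 : ℝ) < 1)] with s hs
  exact scale_int η w hs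

lemma convex_ineq {p : ℝ} (hp : 2 < p) (a b : EE N) :
    ⟪‖a‖ ^ (p - 2) • a, b - a⟫ ≤ (‖b‖ ^ p - ‖a‖ ^ p) / p := by
  have hp0 : 0 < p := by linarith
  have ha := norm_nonneg a
  have hb := norm_nonneg b
  have hpq : (p / (p - 1)).HolderConjugate p := by
    have := (Real.HolderConjugate.conjExponent (p := p) (by linarith)).symm
    simpa [Real.conjExponent] using this
  have h1 : ⟪a, b⟫ ≤ ‖a‖ * ‖b‖ := real_inner_le_norm a b
  have h2 : ‖a‖ ^ (p - 2) * ⟪a, b⟫ ≤ ‖a‖ ^ (p - 1) * ‖b‖ := by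
    rw [← rpow_mul_self' ha hp, mul_assoc]
    exact mul_le_mul_of_nonneg_left h1 (by positivity)
  have h3 := Real.young_inequality_of_nonneg (Real.rpow_nonneg ha (p - 1)) hb hpq
  rw [← Real.rpow_mul ha] at h3
  have e1 : (p - 1) * (p / (p - 1)) = p := by
    have : p - 1 ≠ 0 := by linarith
    field_simp
  rw [e1] at h3
  have e2 : ‖a‖ ^ p / (p / (p - 1)) = ‖a‖ ^ p - ‖a‖ ^ p / p := by
    have : p - 1 ≠ 0 := by linarith
    field_simp
  rw [real_inner_smul_left, inner_sub_right, real_inner_self_eq_norm_sq, mul_sub,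
    rpow_mul_sq ha hp, sub_div]
  linarith

lemma contDiff_absF {lam : ℝ} (hl : 1 < lam) {u : EE N → ℝ} (hu : ContDiff ℝ 1 u) :
    ContDiff ℝ 1 (fun x => |u x| ^ (lam + 1)) :=
  (contDiff_norm_rpow (E := ℝ) (p := lam + 1) (by linarith)).comp hu

lemma fderiv_absF {lam : ℝ} (hl : 1 < lam) {u : EE N → ℝ} (hu : ContDiff ℝ 1 u) (x y : EE N) :
    fderiv ℝ (fun x => |u x| ^ (lam + 1)) x y =
      (lam + 1) * (|u x| ^ (lam - 1) * u x) * fderiv ℝ u x y := by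
  have h1 := hasDerivAt_abs_rpow (u x) (p := lam + 1) (by linarith)
  have h2 := (hu.differentiable one_ne_zero x).hasFDerivAt
  have h3 := h1.comp_hasFDerivAt x h2
  have h4 : fderiv ℝ (fun x => |u x| ^ (lam + 1)) x = _ := h3.fderiv
  rw [h4]
  simp only [ContinuousLinearMap.smul_apply, smul_eq_mul]
  rw [show lam + 1 - 2 = lam - 1 by ring]
  ring

lemma pohozaev {p lam : ℝ} (hp : 2 < p) (hlam : p - 1 < lam)
    {u : EE N → ℝ} (hu : ContDiff ℝ 1 u)
    (hw : ∀ φ : EE N → ℝ, ContDiff ℝ 1 φ → HasCompactSupport φ →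
      ∫ x, ⟪‖gradient u x‖ ^ (p - 2) • gradient u x, gradient φ x⟫ =
        ∫ x, |u x| ^ (lam - 1) * u x * φ x)
    {η : EE N → ℝ} (hη : ContDiff ℝ 1 η) (hc : HasCompactSupport η) (hη0 : ∀ x, 0 ≤ η x) :
    (1 / p) * ((p - N) * (∫ x, ‖gradient u x‖ ^ p * η x) -
        ∫ x, ‖gradient u x‖ ^ p * fderiv ℝ η x x) +
      (∫ x, ⟪‖gradient u x‖ ^ (p - 2) • gradient u x, gradient η x⟫ * fderiv ℝ u x x) +
      (1 / (lam + 1)) * (N * (∫ x, |u x| ^ (lam + 1) * η x) +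
        ∫ x, |u x| ^ (lam + 1) * fderiv ℝ η x x) = 0 := by
  have hl1 : 1 < lam := by linarith
  have hp0 : 0 < p := by linarith
  set V : EE N → EE N := fun x => ‖gradient u x‖ ^ (p - 2) • gradient u x with hV
  have hVc : Continuous V := continuous_flux hu hp
  set f : EE N → ℝ := fun x => |u x| ^ (lam - 1) * u x with hf
  have hfc : Continuous f := continuous_rhs hu hl1
  have hgc : Continuous (fun x => ‖gradient u x‖ ^ p) :=
    (continuous_grad hu).norm.rpow_const (fun _ => Or.inr hp0.le)
  set b : EE N → ℝ := fun x => ⟪V x, gradient η x⟫ - f x * η x with hb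
  have hηc := hη.continuous
  have hb1 : Continuous (fun x => ⟪V x, gradient η x⟫) := hVc.inner (continuous_grad hη)
  have hb2 : Continuous (fun x => f x * η x) := hfc.mul hηc
  have hbc : Continuous b := hb1.sub hb2
  have hb0 : ∀ x, x ∉ tsupport η → b x = 0 := by
    intro x hx
    simp only [hb]
    rw [grad_zero_of_notMem hx, image_eq_zero_of_notMem_tsupport hx]
    simp
  have hbs : HasCompactSupport b := HasCompactSupport.intro hc hb0
  have udiff := hu.differentiable one_ne_zero
  -- the comparison functional
  set G : ℝ → ℝ := fun s => (1 / p) * (s ^ p * ((s ^ N)⁻¹ *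
      ∫ x, ‖gradient u x‖ ^ p * η (s⁻¹ • x)) - ∫ x, ‖gradient u x‖ ^ p * η x) +
      ((∫ x, b x * u (s • x)) - ∫ x, b x * u x) with hG
  have hGd : HasDerivAt G ((1 / p) * ((p - N) * (∫ x, ‖gradient u x‖ ^ p * η x) -
        ∫ x, ‖gradient u x‖ ^ p * fderiv ℝ η x x) + ∫ x, b x * fderiv ℝ u x x) 1 := by
    have d1 := deriv_scaled hη hc hgc
    have d2 : HasDerivAt (fun s : ℝ => s ^ p) p 1 := by
      simpa using Real.hasDerivAt_rpow_const (x := (1 : ℝ)) (p := p) (Or.inl one_ne_zero)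
    have d3 := param_deriv_right hu hbs hbc
    have d4 := (((d2.fun_mul d1).sub_const (∫ x, ‖gradient u x‖ ^ p * η x)).const_mul
      (1 / p)).fun_add (d3.sub_const (∫ x, b x * u x))
    refine d4.congr_deriv ?_
    simp only [inv_one, one_smul, one_pow, Real.one_rpow]
    ring
  have hG1 : G 1 = 0 := by
    simp only [hG, inv_one, one_smul, one_pow, Real.one_rpow]
    ring
  have hGpos : ∀ s : ℝ, 0 < s → 0 ≤ G s := by
    intro s hs
    set us : EE N → ℝ := fun x => u (s • x) with hus
    have husC : ContDiff ℝ 1 us := hu.comp (contDiff_const_smul s)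
    have husg : ∀ x, gradient us x = s • gradient u (s • x) := grad_comp_smul udiff s
    have hφ : ContDiff ℝ 1 (fun x => η x * (us x - u x)) := hη.mul (husC.sub hu)
    have hφs : HasCompactSupport (fun x => η x * (us x - u x)) := hc.mul_right
    have hφg : ∀ x, gradient (fun x => η x * (us x - u x)) x =
        η x • (gradient us x - gradient u x) + (us x - u x) • gradient η x := by
      intro x
      rw [grad_mul (hη.differentiable one_ne_zero x)
        ((husC.sub hu).differentiable one_ne_zero x),
        grad_sub (husC.differentiable one_ne_zero x) (udiff x)]
    have E := hw _ hφ hφs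
    have E1 : ∀ x, ⟪V x, gradient (fun x => η x * (us x - u x)) x⟫ =
        η x * ⟪V x, gradient us x - gradient u x⟫ + (us x - u x) * ⟪V x, gradient η x⟫ := by
      intro x
      rw [hφg, inner_add_right, real_inner_smul_right, real_inner_smul_right]
    have c1 : Continuous (fun x => ⟪V x, gradient (fun x => η x * (us x - u x)) x⟫) :=
      hVc.inner (continuous_grad hφ)
    have s1 : ∀ (w : EE N → ℝ), (∀ x, x ∉ tsupport η → w x = 0) → HasCompactSupport w :=
      fun w h => HasCompactSupport.intro hc h
    have cus := husC.continuous
    have cu := hu.continuous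
    have i1 : Integrable (fun x => ⟪V x, gradient (fun x => η x * (us x - u x)) x⟫) := by
      refine c1.integrable_of_hasCompactSupport (s1 _ fun x hx => ?_)
      rw [E1, grad_zero_of_notMem hx, image_eq_zero_of_notMem_tsupport hx]
      simp
    have i2 : Integrable (fun x => f x * (η x * (us x - u x))) := by
      refine Continuous.integrable_of_hasCompactSupport (hfc.mul (hηc.mul (cus.sub cu)))
        (s1 _ fun x hx => ?_)
      rw [image_eq_zero_of_notMem_tsupport hx]
      simp
    have ib1 : Integrable (fun x => b x * us x) :=
      (hbc.mul cus).integrable_of_hasCompactSupport hbs.mul_right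
    have ib2 : Integrable (fun x => b x * u x) :=
      (hbc.mul cu).integrable_of_hasCompactSupport hbs.mul_right
    have hgsc : Continuous (fun x => ‖gradient u (s • x)‖ ^ p) :=
      hgc.comp (continuous_const_smul s)
    have ig1 : Integrable (fun x => η x * ‖gradient u (s • x)‖ ^ p) :=
      (hηc.mul hgsc).integrable_of_hasCompactSupport hc.mul_right
    have ig2 : Integrable (fun x => ‖gradient u x‖ ^ p * η x) :=
      (hgc.mul hηc).integrable_of_hasCompactSupport hc.mul_left
    have sc := scale_int η (fun y => ‖gradient u y‖ ^ p) hs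
    have hGs : G s = ∫ x, ((1 / p) * (s ^ p * (η x * ‖gradient u (s • x)‖ ^ p) -
        ‖gradient u x‖ ^ p * η x) + (b x * us x - b x * u x)) := by
      simp only [hG]
      rw [← sc]
      have j1 : Integrable (fun x => s ^ p * (η x * ‖gradient u (s • x)‖ ^ p)) := ig1.const_mul _
      have j2 : Integrable (fun x => s ^ p * (η x * ‖gradient u (s • x)‖ ^ p) -
        ‖gradient u x‖ ^ p * η x) := j1.sub ig2
      have j3 : Integrable (fun x => b x * us x - b x * u x) := ib1.sub ib2
      have j4 : Integrable (fun x => (1 / p) * (s ^ p * (η x * ‖gradient u (s • x)‖ ^ p) -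
        ‖gradient u x‖ ^ p * η x)) := j2.const_mul _
      have r1 := integral_add j4 j3
      have r2 := integral_sub ib1 ib2
      have r3 := integral_sub j1 ig2
      have r4 : ∫ x, (1 / p) * (s ^ p * (η x * ‖gradient u (s • x)‖ ^ p) -
        ‖gradient u x‖ ^ p * η x) = (1 / p) * ∫ x, (s ^ p * (η x * ‖gradient u (s • x)‖ ^ p) -
        ‖gradient u x‖ ^ p * η x) := integral_const_mul _ _
      have r5 : ∫ x, s ^ p * (η x * ‖gradient u (s • x)‖ ^ p) =
        s ^ p * ∫ x, η x * ‖gradient u (s • x)‖ ^ p := integral_const_mul _ _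
      rw [r1, r2, r4, r3, r5]
    rw [hGs]
    have hzero : ∫ x, (⟪V x, gradient (fun x => η x * (us x - u x)) x⟫ -
        f x * (η x * (us x - u x))) = 0 := by
      rw [integral_sub i1 i2]
      exact sub_eq_zero.2 E
    rw [← hzero]
    refine integral_mono (i1.sub i2) ?_ (fun x => ?_)
    · exact (((ig1.const_mul _).sub ig2).const_mul _).add (ib1.sub ib2)
    · have cv := convex_ineq hp (gradient u x) (gradient us x)
      have cv' := mul_le_mul_of_nonneg_left cv (hη0 x)
      have nn : ‖gradient us x‖ ^ p = s ^ p * ‖gradient u (s • x)‖ ^ p := by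
        rw [husg, norm_smul, Real.norm_of_nonneg hs.le, Real.mul_rpow hs.le (norm_nonneg _)]
      rw [nn] at cv'
      change _ ≤ _
      simp only
      rw [E1]
      change η x * ⟪V x, gradient us x - gradient u x⟫ ≤ _ at cv'
      have e : (1 / p) * (s ^ p * (η x * ‖gradient u (s • x)‖ ^ p) -
        ‖gradient u x‖ ^ p * η x) = η x * ((s ^ p * ‖gradient u (s • x)‖ ^ p -
        ‖gradient u x‖ ^ p) / p) := by ring
      rw [e]
      simp only [hb]
      nlinarith [cv']
  have hmin : IsLocalMin G 1 := by
    filter_upwards [lt_mem_nhds (zero_lt_one : (0 : ℝ) < 1)] with s hs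
    rw [hG1]
    exact hGpos s hs
  have hfin := hmin.hasDerivAt_eq_zero hGd
  have hdiv := div_identity hη hc (contDiff_absF hl1 hu)
  have hdu : Continuous (fun x => fderiv ℝ u x x) :=
    (hu.continuous_fderiv one_ne_zero).clm_apply continuous_id
  have k1 : Integrable (fun x => ⟪V x, gradient η x⟫ * fderiv ℝ u x x) := by
    refine (hb1.mul hdu).integrable_of_hasCompactSupport (HasCompactSupport.intro hc fun x hx => ?_)
    simp only [Pi.mul_apply]
    rw [grad_zero_of_notMem hx, inner_zero_right, zero_mul]
  have k2 : Integrable (fun x => f x * η x * fderiv ℝ u x x) := by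
    refine (hb2.mul hdu).integrable_of_hasCompactSupport (HasCompactSupport.intro hc fun x hx => ?_)
    simp only [Pi.mul_apply]
    rw [image_eq_zero_of_notMem_tsupport hx, mul_zero, zero_mul]
  have hB : ∫ x, b x * fderiv ℝ u x x = (∫ x, ⟪V x, gradient η x⟫ * fderiv ℝ u x x) -
      ∫ x, f x * η x * fderiv ℝ u x x := by
    rw [← integral_sub k1 k2]
    congr 1
    ext x
    simp only [hb]
    ring
  have hD : ∫ x, η x * fderiv ℝ (fun x => |u x| ^ (lam + 1)) x x =
      (lam + 1) * ∫ x, f x * η x * fderiv ℝ u x x := by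
    rw [← integral_const_mul]
    congr 1
    ext x
    rw [fderiv_absF hl1 hu]
    simp only [hf]
    ring
  rw [hD] at hdiv
  rw [hB] at hfin
  have hne : lam + 1 ≠ 0 := by linarith
  have hX : ∫ x, f x * η x * fderiv ℝ u x x = (1 / (lam + 1)) *
    (-(N : ℝ) * (∫ x, |u x| ^ (lam + 1) * η x) - ∫ x, |u x| ^ (lam + 1) * fderiv ℝ η x x) := by
    rw [← hdiv]; field_simp
  rw [hX] at hfin
  linarith [hfin]

lemma lim_cut {h : EE N → ℝ} (hh : Integrable h) :
    Tendsto (fun n : ℕ => ∫ x, h x * cut N (n + 1) x) atTop (𝓝 (∫ x, h x)) := by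
  refine tendsto_integral_of_dominated_convergence (fun x => ‖h x‖) (fun n => ?_) hh.norm
    (fun n => ?_) ?_
  · exact hh.aestronglyMeasurable.mul (cut_contDiff _).continuous.aestronglyMeasurable
  · refine Eventually.of_forall fun x => ?_
    rw [norm_mul, Real.norm_of_nonneg (cut_nonneg (n + 1 : ℝ) x)]
    exact mul_le_of_le_one_right (norm_nonneg _) (cut_le_one _ _)
  · refine Eventually.of_forall fun x => ?_
    refine tendsto_const_nhds.congr' ?_
    filter_upwards [eventually_ge_atTop ⌈‖x‖⌉₊] with n hn
    have h1 : ‖x‖ ≤ n := (Nat.le_ceil _).trans (by exact_mod_cast hn)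
    rw [cut_eq_one (by positivity) (by linarith), mul_one]

lemma lim_zero {H : EE N → ℝ} (hH : Integrable H) {e : ℕ → EE N → ℝ}
    (hc : ∀ n, Continuous (e n)) (hb : ∀ n x, |e n x| ≤ H x)
    (h0 : ∀ (n : ℕ) x, ‖x‖ < n + 1 → e n x = 0) :
    Tendsto (fun n : ℕ => ∫ x, e n x) atTop (𝓝 0) := by
  have : Tendsto (fun n : ℕ => ∫ x, e n x) atTop (𝓝 (∫ _ : EE N, (0 : ℝ))) := by
    refine tendsto_integral_of_dominated_convergence H
      (fun n => (hc n).aestronglyMeasurable) hH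
      (fun n => Eventually.of_forall fun x => hb n x) ?_
    refine Eventually.of_forall fun x => ?_
    refine tendsto_const_nhds.congr' ?_
    filter_upwards [eventually_ge_atTop ⌈‖x‖⌉₊] with n hn
    have h1 : ‖x‖ ≤ n := (Nat.le_ceil _).trans (by exact_mod_cast hn)
    rw [h0 n x (by linarith)]
  simpa using this

lemma abs_fderiv_cut_le {M : ℝ}
    (hM : ∀ R : ℝ, 0 < R → ∀ x : EE N, ‖x‖ * ‖gradient (cut N R) x‖ ≤ M)
    {R : ℝ} (hR : 0 < R) (x : EE N) : |fderiv ℝ (cut N R) x x| ≤ M := by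
  refine le_trans ?_ (hM R hR x)
  rw [norm_grad, mul_comm]
  exact (fderiv ℝ (cut N R) x).le_opNorm x

lemma fderiv_cut_in {R : ℝ} (hR : 0 < R) {x : EE N} (hx : ‖x‖ < R) :
    fderiv ℝ (cut N R) x x = 0 := by
  rw [← inner_grad_right, grad_cut_in hR hx, inner_zero_right]

lemma norm_flux {p : ℝ} (hp : 2 < p) (a : EE N) : ‖‖a‖ ^ (p - 2) • a‖ = ‖a‖ ^ (p - 1) := by
  rw [norm_smul, Real.norm_of_nonneg (by positivity), rpow_mul_self' (norm_nonneg _) hp]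

lemma pohozaev_limit {p lam : ℝ} (hp : 2 < p) (hlam : p - 1 < lam)
    {u : EE N → ℝ} (hu : ContDiff ℝ 1 u)
    (hw : ∀ φ : EE N → ℝ, ContDiff ℝ 1 φ → HasCompactSupport φ →
      ∫ x, ⟪‖gradient u x‖ ^ (p - 2) • gradient u x, gradient φ x⟫ =
        ∫ x, |u x| ^ (lam - 1) * u x * φ x)
    (hA : Integrable (fun x => ‖gradient u x‖ ^ p))
    (hB : Integrable (fun x => |u x| ^ (lam + 1))) :
    (1 / p) * ((p - N) * (∫ x, ‖gradient u x‖ ^ p)) +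
      (1 / (lam + 1)) * (N * (∫ x, |u x| ^ (lam + 1))) = 0 := by
  obtain ⟨M, hM0, hM⟩ := grad_cut_bound N
  have hl1 : 1 < lam := by linarith
  have hp0 : 0 < p := by linarith
  have hgc : Continuous (fun x => ‖gradient u x‖ ^ p) :=
    (continuous_grad hu).norm.rpow_const (fun _ => Or.inr hp0.le)
  have hfc : Continuous (fun x => |u x| ^ (lam + 1)) := (contDiff_absF hl1 hu).continuous
  have hR : ∀ n : ℕ, (0 : ℝ) < n + 1 := fun n => by positivity
  have hcd : ∀ n : ℕ, Continuous (fun x => fderiv ℝ (cut N (n + 1)) x x) := fun n =>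
    ((cut_contDiff _).continuous_fderiv one_ne_zero).clm_apply continuous_id
  have hdu : Continuous (fun x => fderiv ℝ u x x) :=
    (hu.continuous_fderiv one_ne_zero).clm_apply continuous_id
  have t1 := lim_cut hA
  have t2 := lim_cut hB
  have t3 : Tendsto (fun n : ℕ => ∫ x, ‖gradient u x‖ ^ p * fderiv ℝ (cut N (n + 1)) x x)
      atTop (𝓝 0) := by
    refine lim_zero (hA.mul_const M) (fun n => hgc.mul (hcd n)) (fun n x => ?_) (fun n x hx => ?_)
    · rw [abs_mul, abs_of_nonneg (by positivity)]
      exact mul_le_mul_of_nonneg_left (abs_fderiv_cut_le hM (hR n) x) (by positivity)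
    · rw [fderiv_cut_in (hR n) hx, mul_zero]
  have t4 : Tendsto (fun n : ℕ => ∫ x, |u x| ^ (lam + 1) * fderiv ℝ (cut N (n + 1)) x x)
      atTop (𝓝 0) := by
    refine lim_zero (hB.mul_const M) (fun n => hfc.mul (hcd n)) (fun n x => ?_) (fun n x hx => ?_)
    · rw [abs_mul, abs_of_nonneg (by positivity)]
      exact mul_le_mul_of_nonneg_left (abs_fderiv_cut_le hM (hR n) x) (by positivity)
    · rw [fderiv_cut_in (hR n) hx, mul_zero]
  have t5 : Tendsto (fun n : ℕ => ∫ x, ⟪‖gradient u x‖ ^ (p - 2) • gradient u x,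
      gradient (cut N (n + 1)) x⟫ * fderiv ℝ u x x) atTop (𝓝 0) := by
    refine lim_zero (hA.mul_const M)
      (fun n => ((continuous_flux hu hp).inner (continuous_grad (cut_contDiff _))).mul hdu)
      (fun n x => ?_) (fun n x hx => ?_)
    · rw [abs_mul]
      have a1 := abs_real_inner_le_norm (‖gradient u x‖ ^ (p - 2) • gradient u x)
        (gradient (cut N (n + 1)) x)
      rw [norm_flux hp] at a1
      have a2 : |fderiv ℝ u x x| ≤ ‖gradient u x‖ * ‖x‖ := by
        rw [norm_grad]; exact (fderiv ℝ u x).le_opNorm x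
      have a3 := hM _ (hR n) x
      have a4 : ‖gradient u x‖ ^ p = ‖gradient u x‖ ^ (p - 1) * ‖gradient u x‖ := by
        rw [← rpow_mul_sq (norm_nonneg _) hp, ← rpow_mul_self' (norm_nonneg _) hp]; ring
      calc _ ≤ (‖gradient u x‖ ^ (p - 1) * ‖gradient (cut N (n + 1)) x‖) *
            (‖gradient u x‖ * ‖x‖) := mul_le_mul a1 a2 (abs_nonneg _) (by positivity)
        _ = ‖gradient u x‖ ^ p * (‖x‖ * ‖gradient (cut N (n + 1)) x‖) := by rw [a4]; ring
        _ ≤ _ := mul_le_mul_of_nonneg_left a3 (by positivity)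
    · rw [grad_cut_in (hR n) hx, inner_zero_right, zero_mul]
  have T := (((t1.const_mul (p - N)).sub t3).const_mul (1 / p)).add t5 |>.add
    (((t2.const_mul (N : ℝ)).add t4).const_mul (1 / (lam + 1)))
  have T0 := T.congr (fun n : ℕ => pohozaev hp hlam hu hw (cut_contDiff ((n : ℝ) + 1))
    (cut_compact (hR n)) (cut_nonneg _))
  have := tendsto_nhds_unique T0 tendsto_const_nhds
  linarith [this]

lemma energy_eq {p lam q : ℝ} (hp : 2 < p) (hlam : p - 1 < lam)
    {u : EE N → ℝ} (hu : ContDiff ℝ 1 u)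
    (hw : ∀ φ : EE N → ℝ, ContDiff ℝ 1 φ → HasCompactSupport φ →
      ∫ x, ⟪‖gradient u x‖ ^ (p - 2) • gradient u x, gradient φ x⟫ =
        ∫ x, |u x| ^ (lam - 1) * u x * φ x)
    (hq0 : 0 < q) (hq : 1 / q = 1 / p - 1 / (lam + 1)) (hNq : (N : ℝ) < q)
    {k : ℕ} (hk : q ≤ 2 * k) (hk1 : 1 ≤ k)
    (hA : Integrable (fun x => ‖gradient u x‖ ^ p))
    (hB : Integrable (fun x => |u x| ^ (lam + 1))) :
    (∫ x, ‖gradient u x‖ ^ p) = ∫ x, |u x| ^ (lam + 1) := by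
  have hl1 : 1 < lam := by linarith
  have hp0 : 0 < p := by linarith
  have hgc : Continuous (fun x => ‖gradient u x‖ ^ p) :=
    (continuous_grad hu).norm.rpow_const (fun _ => Or.inr hp0.le)
  have hfc : Continuous (fun x => |u x| ^ (lam + 1)) := (contDiff_absF hl1 hu).continuous
  have hR : ∀ n : ℕ, (0 : ℝ) < n + 1 := fun n => by positivity
  set V : EE N → EE N := fun x => ‖gradient u x‖ ^ (p - 2) • gradient u x with hV
  have hVc : Continuous V := continuous_flux hu hp
  have im : ∀ n : ℕ, Integrable (fun x => u x * ⟪V x, gradient (cut N (n + 1)) x⟫) := by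
    intro n
    refine Continuous.integrable_of_hasCompactSupport
      (hu.continuous.mul (hVc.inner (continuous_grad (cut_contDiff _))))
      (HasCompactSupport.intro (cut_compact (hR n)) fun x hx => ?_)
    rw [grad_zero_of_notMem hx, inner_zero_right, mul_zero]
  have E : ∀ n : ℕ, (∫ x, |u x| ^ (lam + 1) * cut N (n + 1) x) -
      (∫ x, ‖gradient u x‖ ^ p * cut N (n + 1) x) =
      ∫ x, u x * ⟪V x, gradient (cut N (n + 1)) x⟫ := by
    intro n
    have ig : Integrable (fun x => ‖gradient u x‖ ^ p * cut N (n + 1) x) :=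
      (hgc.mul (cut_contDiff _).continuous).integrable_of_hasCompactSupport
        (cut_compact (hR n)).mul_left
    have h1 := hw (fun x => u x * cut N (n + 1) x) (hu.mul (cut_contDiff _))
      (cut_compact (hR n)).mul_left
    have h2 : ∀ x, ⟪V x, gradient (fun x => u x * cut N (n + 1) x) x⟫ =
        u x * ⟪V x, gradient (cut N (n + 1)) x⟫ + ‖gradient u x‖ ^ p * cut N (n + 1) x := by
      intro x
      rw [grad_mul (hu.differentiable one_ne_zero x)
        ((cut_contDiff _).differentiable one_ne_zero x), inner_add_right, real_inner_smul_right,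
        real_inner_smul_right]
      have : ⟪V x, gradient u x⟫ = ‖gradient u x‖ ^ p := by
        simp only [hV]
        rw [real_inner_smul_left, real_inner_self_eq_norm_sq, rpow_mul_sq (norm_nonneg _) hp]
      rw [this]; ring
    have h3 : ∀ x, |u x| ^ (lam - 1) * u x * (u x * cut N (n + 1) x) =
        |u x| ^ (lam + 1) * cut N (n + 1) x := by
      intro x
      rw [← abs_pow_lam hl1]; ring
    have h4 : ∫ x, ⟪V x, gradient (fun x => u x * cut N (n + 1) x) x⟫ =
        (∫ x, u x * ⟪V x, gradient (cut N (n + 1)) x⟫) +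
          ∫ x, ‖gradient u x‖ ^ p * cut N (n + 1) x := by
      rw [← integral_add (im n) ig]
      exact integral_congr_ae (Eventually.of_forall h2)
    have h5 : ∫ x, |u x| ^ (lam - 1) * u x * (u x * cut N (n + 1) x) =
        ∫ x, |u x| ^ (lam + 1) * cut N (n + 1) x := integral_congr_ae (Eventually.of_forall h3)
    linarith [h1.symm.trans h4]
  set A := ∫ x, ‖gradient u x‖ ^ p with hAd
  set B := ∫ x, |u x| ^ (lam + 1) with hBd
  have T : Tendsto (fun n : ℕ => ∫ x, u x * ⟪V x, gradient (cut N (n + 1)) x⟫) atTop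
      (𝓝 (B - A)) := ((lim_cut hB).sub (lim_cut hA)).congr E
  have hA0 : 0 ≤ A := integral_nonneg fun x => by positivity
  have hB0 : 0 ≤ B := integral_nonneg fun x => by positivity
  have key : ∀ ε : ℝ, 0 < ε → |B - A| ≤ ε * A + ε * B := by
    intro ε hε
    obtain ⟨C, hC0, hC⟩ := pw_young hp (l := lam + 1) (by linarith) hq0 hq (j := 1) (k := k)
      le_rfl (by norm_num) hk hk1 hε zero_le_one
    have bd : ∀ n : ℕ, |∫ x, u x * ⟪V x, gradient (cut N (n + 1)) x⟫| ≤
        ε * A + ε * B + C * (((n : ℝ) + 1) ^ ((N : ℝ) - q) * ∫ x, ‖gradient (chi N) x‖ ^ q) := by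
      intro n
      have iG : Integrable (fun x => ‖gradient (cut N (n + 1)) x‖ ^ q) := by
        refine Continuous.integrable_of_hasCompactSupport
          ((continuous_grad (cut_contDiff _)).norm.rpow_const (fun _ => Or.inr hq0.le)) ?_
        refine HasCompactSupport.intro (cut_compact (hR n) (N := N)) (fun x hx => ?_)
        simp [grad_zero_of_notMem hx, hq0.ne']
      have j1 : Integrable (fun x => ε * ‖gradient u x‖ ^ p) := hA.const_mul _
      have j2 : Integrable (fun x => ε * |u x| ^ (lam + 1)) := hB.const_mul _
      have j3 : Integrable (fun x => C * ‖gradient (cut N (n + 1)) x‖ ^ q) := iG.const_mul _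
      have j12 : Integrable (fun x => ε * ‖gradient u x‖ ^ p + ε * |u x| ^ (lam + 1)) := j1.add j2
      have r1 : ∫ x, ε * ‖gradient u x‖ ^ p = ε * A := integral_const_mul _ _
      have r2 : ∫ x, ε * |u x| ^ (lam + 1) = ε * B := integral_const_mul _ _
      have r3 : ∫ x, C * ‖gradient (cut N (n + 1)) x‖ ^ q =
        C * ∫ x, ‖gradient (cut N (n + 1)) x‖ ^ q := integral_const_mul _ _
      rw [← integral_grad_cut (hR n), ← r3, ← r1, ← r2, ← integral_add j1 j2,
        ← integral_add j12 j3]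
      refine (abs_integral_le_integral_abs).trans ?_
      refine integral_mono (im n).abs (j12.add j3) (fun x => ?_)
      have a1 := abs_real_inner_le_norm (V x) (gradient (cut N (n + 1)) x)
      have a2 : ‖V x‖ = ‖gradient u x‖ ^ (p - 1) := norm_flux hp _
      rw [a2] at a1
      have a3 := hC ‖gradient u x‖ |u x| ‖gradient (cut N (n + 1)) x‖ 1 (norm_nonneg _)
        (abs_nonneg _) (norm_nonneg _) zero_le_one le_rfl
      simp only [one_pow, mul_one, pow_one, one_mul, Nat.cast_one] at a3
      change |u x * ⟪V x, gradient (cut N (n + 1)) x⟫| ≤ ε * ‖gradient u x‖ ^ p +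
        ε * |u x| ^ (lam + 1) + C * ‖gradient (cut N (n + 1)) x‖ ^ q
      refine le_trans ?_ a3
      rw [abs_mul]
      calc _ ≤ |u x| * (‖gradient u x‖ ^ (p - 1) * ‖gradient (cut N (n + 1)) x‖) :=
            mul_le_mul_of_nonneg_left a1 (abs_nonneg _)
        _ = _ := by ring
    have tp : Tendsto (fun n : ℕ => ((n : ℝ) + 1) ^ ((N : ℝ) - q)) atTop (𝓝 0) := by
      have h1 := tendsto_rpow_neg_atTop (y := q - N) (by linarith)
      rw [neg_sub] at h1
      exact h1.comp (tendsto_atTop_add_const_right _ _ tendsto_natCast_atTop_atTop)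
    have tb := ((tp.mul_const (∫ x, ‖gradient (chi N) x‖ ^ q)).const_mul C).const_add
      (ε * A + ε * B)
    have := le_of_tendsto_of_tendsto' T.abs tb bd
    simpa using this
  have : |B - A| ≤ 0 := by
    refine le_of_forall_pos_le_add fun δ hδ => ?_
    have h := key (δ / (A + B + 1)) (by positivity)
    have h2 : δ / (A + B + 1) * A + δ / (A + B + 1) * B ≤ δ := by
      rw [← mul_add, div_mul_eq_mul_div, div_le_iff₀ (by positivity)]
      nlinarith
    linarith
  have := abs_nonpos_iff.1 this
  linarith

end LiouvilleAux

/-- **Lemma 3.3, Liouville theorem for solutions stable outside a compact set.**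
Let `p > 2`, with `p - 1 < λ`, and `λ < (N(p-1)+p)/(N-p)` in case `N > p`. If
`u ∈ C¹(ℝ^N)` is a weak solution of `-Δ_p u = |u|^{λ-1} u` on all of `ℝ^N` which is
stable outside a compact set `K ⊂ ℝ^N`, then `u ≡ 0`. -/
theorem liouville_stable_outside_compact
    (N : ℕ) (p lam : ℝ) (hp : 2 < p)
    (hlam₁ : p - 1 < lam)
    (hlam₂ : (N : ℝ) > p → lam < ((N : ℝ) * (p - 1) + p) / ((N : ℝ) - p))
    (u : EuclideanSpace ℝ (Fin N) → ℝ) (hu : ContDiff ℝ 1 u)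
    -- `u` is a weak solution of `-Δ_p u = |u|^{λ-1} u` on `ℝ^N`
    (hweak : ∀ φ : EuclideanSpace ℝ (Fin N) → ℝ,
      ContDiff ℝ (⊤ : ℕ∞) φ → HasCompactSupport φ →
      ∫ x, ‖gradient u x‖ ^ (p - 2) * ⟪gradient u x, gradient φ x⟫ =
        ∫ x, |u x| ^ (lam - 1) * u x * φ x)
    -- `u` is stable outside a compact set `K`
    (K : Set (EuclideanSpace ℝ (Fin N))) (hK : IsCompact K)
    (hstable : ∀ φ : EuclideanSpace ℝ (Fin N) → ℝ,
      ContDiff ℝ 1 φ → HasCompactSupport φ → tsupport φ ⊆ Kᶜ →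
      0 ≤ ∫ x,
        (‖gradient u x‖ ^ (p - 2) * ‖gradient φ x‖ ^ 2 +
          ((p - 2) * ‖gradient u x‖ ^ (p - 4) * ⟪gradient u x, gradient φ x⟫ ^ 2 -
            lam * |u x| ^ (lam - 1) * φ x ^ 2))) :
    ∀ x, u x = 0 := by
  have hp0 : 0 < p := by linarith
  have hl1 : 1 < lam := by linarith
  have hl0 : 0 < lam + 1 := by linarith
  have hw : ∀ φ : EuclideanSpace ℝ (Fin N) → ℝ, ContDiff ℝ 1 φ → HasCompactSupport φ →
      ∫ x, ⟪‖gradient u x‖ ^ (p - 2) • gradient u x, gradient φ x⟫ =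
        ∫ x, |u x| ^ (lam - 1) * u x * φ x := by
    intro φ hφ hc
    refine LiouvilleAux.weak_C1 (LiouvilleAux.continuous_flux hu hp)
      (LiouvilleAux.continuous_rhs hu hl1) (fun ψ hψ hcψ => ?_) hφ hc
    simp only [real_inner_smul_left]
    exact hweak ψ hψ hcψ
  have hd : 0 < 1 / p - 1 / (lam + 1) := by
    rw [sub_pos]
    exact one_div_lt_one_div_of_lt hp0 (by linarith)
  obtain ⟨q, hqd⟩ : ∃ q, q = (1 / p - 1 / (lam + 1))⁻¹ := ⟨_, rfl⟩
  have hq0 : 0 < q := by rw [hqd]; positivity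
  have hq : 1 / q = 1 / p - 1 / (lam + 1) := by rw [hqd, one_div, inv_inv]
  -- the subcritical condition
  have hsub : (N : ℝ) * (1 / p - 1 / (lam + 1)) < 1 := by
    by_cases hNp : (N : ℝ) > p
    · have h := hlam₂ hNp
      have hNp' : 0 < (N : ℝ) - p := by linarith
      rw [lt_div_iff₀ hNp'] at h
      have e : (N : ℝ) * (1 / p - 1 / (lam + 1)) = N * (lam + 1 - p) / (p * (lam + 1)) := by
        field_simp
      rw [e, div_lt_one (by positivity)]
      nlinarith
    · have hNp' : (N : ℝ) ≤ p := not_lt.1 hNp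
      have h1 : (N : ℝ) * (1 / p - 1 / (lam + 1)) ≤ p * (1 / p - 1 / (lam + 1)) :=
        mul_le_mul_of_nonneg_right hNp' hd.le
      have h2 : p * (1 / p - 1 / (lam + 1)) = 1 - p / (lam + 1) := by field_simp
      have h3 : 0 < p / (lam + 1) := by positivity
      linarith
  have hNq : (N : ℝ) < q := by
    rw [← hq, mul_one_div, div_lt_one hq0] at hsub
    exact hsub
  obtain ⟨k0, hk0⟩ := exists_nat_ge q
  obtain ⟨k, hk1, hk⟩ : ∃ k : ℕ, 1 ≤ k ∧ q ≤ 2 * k := by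
    refine ⟨k0 + 1, by omega, ?_⟩
    push_cast
    have : (0 : ℝ) ≤ k0 := Nat.cast_nonneg _
    linarith
  obtain ⟨C, hC, hE⟩ := LiouvilleAux.energy_estimate hp hlam₁ hu hw hstable hq0 hq hk hk1
  have hgc : Continuous (fun x => ‖gradient u x‖ ^ p) :=
    (LiouvilleAux.continuous_grad hu).norm.rpow_const (fun _ => Or.inr hp0.le)
  have hfc : Continuous (fun x => |u x| ^ (lam + 1)) :=
    (LiouvilleAux.contDiff_absF hl1 hu).continuous
  have hW := LiouvilleAux.energy_integrable (hgc.add hfc)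
    (fun x => add_nonneg (Real.rpow_nonneg (norm_nonneg _) _) (Real.rpow_nonneg (abs_nonneg _) _))
    hK hq0 hNq hC hE hk1
  have hA : Integrable (fun x => ‖gradient u x‖ ^ p) := by
    refine hW.mono' hgc.aestronglyMeasurable (Filter.Eventually.of_forall fun x => ?_)
    rw [Real.norm_of_nonneg (by positivity)]
    exact le_add_of_nonneg_right (Real.rpow_nonneg (abs_nonneg _) _)
  have hB : Integrable (fun x => |u x| ^ (lam + 1)) := by
    refine hW.mono' hfc.aestronglyMeasurable (Filter.Eventually.of_forall fun x => ?_)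
    rw [Real.norm_of_nonneg (by positivity)]
    exact le_add_of_nonneg_left (Real.rpow_nonneg (norm_nonneg _) _)
  have h1 := LiouvilleAux.pohozaev_limit hp hlam₁ hu hw hA hB
  rw [LiouvilleAux.energy_eq hp hlam₁ hu hw hq0 hq hNq hk hk1 hA hB] at h1
  have h2 : (1 - (N : ℝ) * (1 / p - 1 / (lam + 1))) * (∫ x, |u x| ^ (lam + 1)) = 0 := by
    rw [← h1]
    field_simp
    ring
  have h3 : (∫ x, |u x| ^ (lam + 1)) = 0 := by
    rcases mul_eq_zero.1 h2 with h | h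
    · linarith
    · exact h
  rw [integral_eq_zero_iff_of_nonneg (fun x => Real.rpow_nonneg (abs_nonneg _) _) hB] at h3
  have h4 := (hfc.ae_eq_iff_eq volume continuous_const).1 h3
  intro x
  have h5 : |u x| ^ (lam + 1) = 0 := congrFun h4 x
  rw [Real.rpow_eq_zero (abs_nonneg _) hl0.ne'] at h5
  exact abs_eq_zero.1 h5
end

section
/- Let (X, d) be a compact metric space and let D ⊆ Σ ⊆ X, where D is non-empty and Σ is closed. Set Γ := Σ \ D. Let M : D → (0, ∞) be bounded on compact subsets of D, and fix a real number k > 0. If y ∈ D satisfies M(y) · dist(y, Γ) > 2k, then there exists x ∈ D such that M(x) · dist(x, Γ) > 2k, M(x) ≥ M(y), and M(z) ≤ 2 M(x) for all z ∈ D ∩ closedBall(x, k / M(x)). -/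
open Metric

/-- **Lemma 3.4 (Doubling lemma).** Let `(X, d)` be a compact metric space and
`D ⊆ Σ ⊆ X` with `D` nonempty and `Σ` closed; set `Γ := Σ \ D`. Let `M : D → (0, ∞)`
be bounded on compact subsets of `D` and fix `k > 0`. If `y ∈ D` satisfies
`M(y) · dist(y, Γ) > 2k` (with `dist(y, Γ) = +∞` when `Γ = ∅`, which we encode via
the extended infimum distance: `infEdist y Γ > 2k / M(y)`), then there is `x ∈ D` with
`M(x) · dist(x, Γ) > 2k`, `M(x) ≥ M(y)`, and `M(z) ≤ 2 M(x)` for every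
`z ∈ D ∩ closedBall(x, k / M(x))`. -/
theorem doubling_lemma
    {X : Type*} [MetricSpace X] [CompactSpace X]
    (D S : Set X) (hDS : D ⊆ S) (hD : D.Nonempty) (hS : IsClosed S)
    (M : X → ℝ) (hMpos : ∀ x ∈ D, 0 < M x)
    (hMbdd : ∀ K : Set X, K ⊆ D → IsCompact K → ∃ B : ℝ, ∀ x ∈ K, M x ≤ B)
    (k : ℝ) (hk : 0 < k)
    (y : X) (hy : y ∈ D)
    (hyΓ : ENNReal.ofReal (2 * k / M y) < EMetric.infEdist y (S \ D)) :
    ∃ x ∈ D,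
      ENNReal.ofReal (2 * k / M x) < EMetric.infEdist x (S \ D) ∧
      M y ≤ M x ∧
      ∀ z ∈ D ∩ closedBall x (k / M x), M z ≤ 2 * M x := by
  by_contra hcon
  push Not at hcon
  have step : ∀ x : {x : X // x ∈ D ∧
      ENNReal.ofReal (2 * k / M x) < EMetric.infEdist x (S \ D) ∧ M y ≤ M x},
      ∃ z : {x : X // x ∈ D ∧
      ENNReal.ofReal (2 * k / M x) < EMetric.infEdist x (S \ D) ∧ M y ≤ M x},
      dist x.1 z.1 ≤ k / M x.1 ∧ 2 * M x.1 < M z.1 := by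
    rintro ⟨x, hxD, hx, hyx⟩
    obtain ⟨z, ⟨hzD, hzb⟩, hz⟩ := hcon x hxD hx hyx
    have hMx := hMpos x hxD
    have hMz := hMpos z hzD
    have hd : dist x z ≤ k / M x := by
      rw [dist_comm]; exact hzb
    refine ⟨⟨z, hzD, ?_, by linarith⟩, hd, hz⟩
    have h1 : EMetric.infEdist x (S \ D) ≤ EMetric.infEdist z (S \ D) + edist x z :=
      Metric.infEDist_le_infEDist_add_edist
    by_contra hn
    have hn' := not_lt.mp hn
    have h2 : edist x z ≤ ENNReal.ofReal (k / M x) := by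
      rw [edist_dist]; exact ENNReal.ofReal_le_ofReal hd
    have h3 : EMetric.infEdist x (S \ D) ≤ ENNReal.ofReal (2 * k / M z + k / M x) := by
      rw [ENNReal.ofReal_add (by positivity) (by positivity)]
      exact h1.trans (add_le_add hn' h2)
    have h4 : 2 * k / M z + k / M x ≤ 2 * k / M x := by
      have : 2 * k / M z ≤ 2 * k / (2 * M x) :=
        div_le_div_of_nonneg_left (by positivity) (by positivity) hz.le
      have e1 : 2 * k / (2 * M x) = k / M x := by field_simp
      have e2 : 2 * k / M x = k / M x + k / M x := by ring
      linarith
    exact absurd (hx.trans_le (h3.trans (ENNReal.ofReal_le_ofReal h4))) (lt_irrefl _)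
  choose f hf using step
  let w := fun n : ℕ => f^[n] ⟨y, hy, hyΓ, le_rfl⟩
  have hw : ∀ n, w (n + 1) = f (w n) := fun n => Function.iterate_succ_apply' f n _
  let u := fun n : ℕ => (w n).1
  have hu0 : u 0 = y := rfl
  have hMy := hMpos y hy
  have hud : ∀ n, u n ∈ D := fun n => (w n).2.1
  have hM : ∀ n, M y * 2 ^ n ≤ M (u n) := by
    intro n
    induction n with
    | zero => simp [hu0]
    | succ n ih =>
      have h := (hf (w n)).2
      rw [← hw] at h
      change 2 * M (u n) < M (u (n + 1)) at h
      rw [pow_succ]; linarith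
  have hdist : ∀ n, dist (u n) (u (n + 1)) ≤ (2 * k / M y) / 2 / 2 ^ n := by
    intro n
    have h := (hf (w n)).1
    rw [← hw] at h
    change dist (u n) (u (n + 1)) ≤ k / M (u n) at h
    refine h.trans ?_
    have e : (2 * k / M y) / 2 / 2 ^ n = k / (M y * 2 ^ n) := by field_simp
    rw [e]
    exact div_le_div_of_nonneg_left hk.le (by positivity) (hM n)
  obtain ⟨a, ha⟩ := cauchySeq_tendsto_of_complete (cauchySeq_of_le_geometric_two hdist)
  have hda : dist y a ≤ 2 * k / M y := dist_le_of_le_geometric_two_of_tendsto₀ hdist ha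
  have haS : a ∈ S := hS.mem_of_tendsto ha (Filter.Eventually.of_forall fun n => hDS (hud n))
  have haD : a ∈ D := by
    by_contra hna
    have h1 : EMetric.infEdist y (S \ D) ≤ edist y a := Metric.infEDist_le_edist_of_mem ⟨haS, hna⟩
    rw [edist_dist] at h1
    exact absurd (hyΓ.trans_le (h1.trans (ENNReal.ofReal_le_ofReal hda))) (lt_irrefl _)
  obtain ⟨B, hB⟩ := hMbdd (insert a (Set.range u))
    (Set.insert_subset haD (Set.range_subset_iff.2 hud)) ha.isCompact_insert_range
  obtain ⟨n, hn⟩ := pow_unbounded_of_one_lt (B / M y) (one_lt_two : (1 : ℝ) < 2)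
  have h1 := hB (u n) (Or.inr ⟨n, rfl⟩)
  have h2 := hM n
  rw [div_lt_iff₀ hMy] at hn
  linarith
end
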